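/- arXiv:2203.01740 — 13 statements merged into one kernel-verified Lean document; each statement's English description precedes it below -/
import Mathlib

section
/- Let w₁, w₂ ≥ 0 with w₁ + w₂ > 0. In every weighted two-player congestion game with weights w₁, w₂ and uniform costs, every pure Nash equilibrium A and every action profile B satisfy C(A) ≤ (1 + (2·w₁·w₂ + max(w₁,w₂)²)/(w₁² + w₁·w₂ + w₂²)) · C(B). -/
open Finset Real

/-- A weighted two-player congestion game with weights `w₁, w₂`:
a finite set of resources `Fin n`, nonempty finite collections of actions
(subsets of resources) for each player, and nonnegative affine cost
coefficients `α r`, `β r` for each resource. -/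
structure CGame (w₁ w₂ : ℝ) where
  n : ℕ
  A1 : Finset (Finset (Fin n))
  A2 : Finset (Finset (Fin n))
  A1_nonempty : A1.Nonempty
  A2_nonempty : A2.Nonempty
  α : Fin n → ℝ
  β : Fin n → ℝ
  α_nonneg : ∀ r, 0 ≤ α r
  β_nonneg : ∀ r, 0 ≤ β r

namespace CGame

variable {w₁ w₂ : ℝ}

/-- The load of resource `r` under the action profile `(a₁, a₂)`. -/
def load (G : CGame w₁ w₂) (a₁ a₂ : Finset (Fin G.n)) (r : Fin G.n) : ℝ :=
  (if r ∈ a₁ then w₁ else 0) + (if r ∈ a₂ then w₂ else 0)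

/-- Uniform cost of player 1. -/
def C1uni (G : CGame w₁ w₂) (a₁ a₂ : Finset (Fin G.n)) : ℝ :=
  ∑ r ∈ a₁, (G.α r + G.β r * G.load a₁ a₂ r)

/-- Uniform cost of player 2. -/
def C2uni (G : CGame w₁ w₂) (a₁ a₂ : Finset (Fin G.n)) : ℝ :=
  ∑ r ∈ a₂, (G.α r + G.β r * G.load a₁ a₂ r)

/-- Uniform social cost. -/
def Cuni (G : CGame w₁ w₂) (a₁ a₂ : Finset (Fin G.n)) : ℝ :=
  G.C1uni a₁ a₂ + G.C2uni a₁ a₂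

/-- Proportional cost of player 1. -/
def C1prop (G : CGame w₁ w₂) (a₁ a₂ : Finset (Fin G.n)) : ℝ :=
  w₁ * ∑ r ∈ a₁, (G.α r + G.β r * G.load a₁ a₂ r)

/-- Proportional cost of player 2. -/
def C2prop (G : CGame w₁ w₂) (a₁ a₂ : Finset (Fin G.n)) : ℝ :=
  w₂ * ∑ r ∈ a₂, (G.α r + G.β r * G.load a₁ a₂ r)

/-- Proportional social cost. -/
def Cprop (G : CGame w₁ w₂) (a₁ a₂ : Finset (Fin G.n)) : ℝ :=
  G.C1prop a₁ a₂ + G.C2prop a₁ a₂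

/-- `(a₁, a₂)` is an action profile: each action is admissible for its player. -/
def IsProfile (G : CGame w₁ w₂) (a₁ a₂ : Finset (Fin G.n)) : Prop :=
  a₁ ∈ G.A1 ∧ a₂ ∈ G.A2

/-- The game is symmetric if both players have the same actions. -/
def Symm (G : CGame w₁ w₂) : Prop := G.A1 = G.A2

/-- Pure Nash equilibrium for uniform costs. -/
def IsNashUni (G : CGame w₁ w₂) (a₁ a₂ : Finset (Fin G.n)) : Prop :=
  G.IsProfile a₁ a₂ ∧
  (∀ b₁ ∈ G.A1, G.C1uni a₁ a₂ ≤ G.C1uni b₁ a₂) ∧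
  (∀ b₂ ∈ G.A2, G.C2uni a₁ a₂ ≤ G.C2uni a₁ b₂)

/-- Pure Nash equilibrium for proportional costs. -/
def IsNashProp (G : CGame w₁ w₂) (a₁ a₂ : Finset (Fin G.n)) : Prop :=
  G.IsProfile a₁ a₂ ∧
  (∀ b₁ ∈ G.A1, G.C1prop a₁ a₂ ≤ G.C1prop b₁ a₂) ∧
  (∀ b₂ ∈ G.A2, G.C2prop a₁ a₂ ≤ G.C2prop a₁ b₂)

/-- Subgame-perfect outcome with player 1 moving first, uniform costs. -/
def IsSPE1Uni (G : CGame w₁ w₂) (a₁ a₂ : Finset (Fin G.n)) : Prop :=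
  G.IsProfile a₁ a₂ ∧
  ∃ b : Finset (Fin G.n) → Finset (Fin G.n),
    (∀ x ∈ G.A1, b x ∈ G.A2) ∧
    (∀ x ∈ G.A1, ∀ y ∈ G.A2, G.C2uni x (b x) ≤ G.C2uni x y) ∧
    a₂ = b a₁ ∧
    (∀ x ∈ G.A1, G.C1uni a₁ a₂ ≤ G.C1uni x (b x))

/-- Subgame-perfect outcome with player 2 moving first, uniform costs. -/
def IsSPE2Uni (G : CGame w₁ w₂) (a₁ a₂ : Finset (Fin G.n)) : Prop :=
  G.IsProfile a₁ a₂ ∧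
  ∃ b : Finset (Fin G.n) → Finset (Fin G.n),
    (∀ x ∈ G.A2, b x ∈ G.A1) ∧
    (∀ x ∈ G.A2, ∀ y ∈ G.A1, G.C1uni (b x) x ≤ G.C1uni y x) ∧
    a₁ = b a₂ ∧
    (∀ x ∈ G.A2, G.C2uni a₁ a₂ ≤ G.C2uni (b x) x)

/-- Subgame-perfect outcome with player 1 moving first, proportional costs. -/
def IsSPE1Prop (G : CGame w₁ w₂) (a₁ a₂ : Finset (Fin G.n)) : Prop :=
  G.IsProfile a₁ a₂ ∧
  ∃ b : Finset (Fin G.n) → Finset (Fin G.n),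
    (∀ x ∈ G.A1, b x ∈ G.A2) ∧
    (∀ x ∈ G.A1, ∀ y ∈ G.A2, G.C2prop x (b x) ≤ G.C2prop x y) ∧
    a₂ = b a₁ ∧
    (∀ x ∈ G.A1, G.C1prop a₁ a₂ ≤ G.C1prop x (b x))

/-- Subgame-perfect outcome with player 2 moving first, proportional costs. -/
def IsSPE2Prop (G : CGame w₁ w₂) (a₁ a₂ : Finset (Fin G.n)) : Prop :=
  G.IsProfile a₁ a₂ ∧
  ∃ b : Finset (Fin G.n) → Finset (Fin G.n),
    (∀ x ∈ G.A2, b x ∈ G.A1) ∧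
    (∀ x ∈ G.A2, ∀ y ∈ G.A1, G.C1prop (b x) x ≤ G.C1prop y x) ∧
    a₁ = b a₂ ∧
    (∀ x ∈ G.A2, G.C2prop a₁ a₂ ≤ G.C2prop (b x) x)

end CGame

namespace CGame

variable {w₁ w₂ : ℝ}

/-- The same game with the roles of the two players exchanged. -/
abbrev swap (G : CGame w₁ w₂) : CGame w₂ w₁ where
  n := G.n
  A1 := G.A2
  A2 := G.A1
  A1_nonempty := G.A2_nonempty
  A2_nonempty := G.A1_nonempty
  α := G.α
  β := G.β
  α_nonneg := G.α_nonneg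
  β_nonneg := G.β_nonneg

theorem swap_load (G : CGame w₁ w₂) (a₁ a₂ : Finset (Fin G.n)) (r : Fin G.n) :
    G.swap.load a₂ a₁ r = G.load a₁ a₂ r :=
  add_comm _ _

theorem swap_C1uni (G : CGame w₁ w₂) (a₁ a₂ : Finset (Fin G.n)) :
    G.swap.C1uni a₂ a₁ = G.C2uni a₁ a₂ :=
  Finset.sum_congr rfl fun r _ => by rw [swap_load]

theorem swap_C2uni (G : CGame w₁ w₂) (a₁ a₂ : Finset (Fin G.n)) :
    G.swap.C2uni a₂ a₁ = G.C1uni a₁ a₂ :=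
  Finset.sum_congr rfl fun r _ => by rw [swap_load]

theorem swap_Cuni (G : CGame w₁ w₂) (a₁ a₂ : Finset (Fin G.n)) :
    G.swap.Cuni a₂ a₁ = G.Cuni a₁ a₂ := by
  rw [Cuni, swap_C1uni, swap_C2uni, Cuni, add_comm]

theorem IsNashUni.swap {G : CGame w₁ w₂} {a₁ a₂ : Finset (Fin G.n)}
    (h : G.IsNashUni a₁ a₂) : G.swap.IsNashUni a₂ a₁ := by
  refine ⟨⟨h.1.2, h.1.1⟩, fun b hb => ?_, fun b hb => ?_⟩
  · have := h.2.2 b hb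
    rwa [← swap_C1uni, ← swap_C1uni] at this
  · have := h.2.1 b hb
    rwa [← swap_C2uni, ← swap_C2uni] at this

/-- The smoothness inequality of a single resource, summed over all resources: player 1, who has
the larger weight, gets the multiplier `w₁ * (2 * w₁ + w₂)`, and player 2 the multiplier
`w₁ ^ 2 + w₁ * w₂ + w₂ ^ 2`. -/
theorem uni_smooth (h₂ : 0 ≤ w₂) (h : w₂ ≤ w₁) (G : CGame w₁ w₂)
    (a₁ a₂ b₁ b₂ : Finset (Fin G.n)) :
    (w₁ ^ 2 + w₁ * w₂ + w₂ ^ 2) * (G.C1uni a₁ a₂ + G.C2uni a₁ b₂) +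
        w₁ * (2 * w₁ + w₂) * G.C1uni b₁ a₂ ≤
      (2 * w₁ ^ 2 + 3 * w₁ * w₂ + w₂ ^ 2) * G.Cuni b₁ b₂ +
        w₁ * (2 * w₁ + w₂) * G.C1uni a₁ a₂ := by
  have ite_sum (s : Finset (Fin G.n)) (f : Fin G.n → ℝ) :
      ∑ r ∈ s, f r = ∑ r, if r ∈ s then f r else 0 := by simp
  simp only [Cuni, C1uni, C2uni, load]
  rw [ite_sum a₁, ite_sum b₂, ite_sum b₁, ite_sum b₁, ite_sum b₂]
  simp only [← Finset.sum_add_distrib, Finset.mul_sum]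
  refine Finset.sum_le_sum fun r _ => ?_
  have hα := G.α_nonneg r
  have hβ := G.β_nonneg r
  obtain ⟨d, hd, rfl⟩ : ∃ d, 0 ≤ d ∧ w₁ = w₂ + d := ⟨w₁ - w₂, by linarith, by ring⟩
  by_cases ha₁ : r ∈ a₁ <;> by_cases ha₂ : r ∈ a₂ <;> by_cases hb₁ : r ∈ b₁ <;>
    by_cases hb₂ : r ∈ b₂ <;> simp only [ha₁, ha₂, hb₁, hb₂, if_true, if_false] <;>
    rw [← sub_nonneg] <;> ring_nf <;> positivity

theorem Cuni_le_of_isNashUni (h₂ : 0 ≤ w₂) (h : w₂ ≤ w₁) (hsum : 0 < w₁ + w₂)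
    (G : CGame w₁ w₂) (a₁ a₂ b₁ b₂ : Finset (Fin G.n))
    (hA : G.IsNashUni a₁ a₂) (hB : G.IsProfile b₁ b₂) :
    G.Cuni a₁ a₂ ≤
      (1 + (2 * w₁ * w₂ + w₁ ^ 2) / (w₁ ^ 2 + w₁ * w₂ + w₂ ^ 2)) * G.Cuni b₁ b₂ := by
  have hw : 0 < w₁ := by linarith
  have hD : 0 < w₁ ^ 2 + w₁ * w₂ + w₂ ^ 2 := by positivity
  have hN₁ := mul_le_mul_of_nonneg_left (hA.2.1 b₁ hB.1)
    (by positivity : 0 ≤ w₁ * (2 * w₁ + w₂))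
  have hN₂ := mul_le_mul_of_nonneg_left (hA.2.2 b₂ hB.2) hD.le
  have hS := uni_smooth h₂ h G a₁ a₂ b₁ b₂
  rw [one_add_div hD.ne', div_mul_eq_mul_div, le_div_iff₀ hD, Cuni]
  linarith

end CGame

/-- price of anarchy upper bound for simultaneous uniformly weighted
two-player congestion games with weights `w₁, w₂`. -/
theorem poa_sim_uniform_upper (w₁ w₂ : ℝ) (h₁ : 0 ≤ w₁) (h₂ : 0 ≤ w₂)
    (hsum : 0 < w₁ + w₂) (G : CGame w₁ w₂) (a₁ a₂ b₁ b₂ : Finset (Fin G.n))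
    (hA : G.IsNashUni a₁ a₂) (hB : G.IsProfile b₁ b₂) :
    G.Cuni a₁ a₂ ≤
      (1 + (2 * w₁ * w₂ + (max w₁ w₂) ^ 2) / (w₁ ^ 2 + w₁ * w₂ + w₂ ^ 2)) *
        G.Cuni b₁ b₂ := by
  rcases le_total w₂ w₁ with h | h
  · rw [max_eq_left h]
    exact G.Cuni_le_of_isNashUni h₂ h hsum a₁ a₂ b₁ b₂ hA hB
  · have := G.swap.Cuni_le_of_isNashUni h₁ h (by linarith) a₂ a₁ b₂ b₁ hA.swap ⟨hB.2, hB.1⟩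
    rw [CGame.swap_Cuni, CGame.swap_Cuni] at this
    rw [max_eq_right h]
    convert this using 3
    ring
end

section
/- Let w₁ ≥ w₂ > 0. There exist a weighted two-player congestion game with weights w₁, w₂ and uniform costs, a pure Nash equilibrium A, and an action profile B such that C(B) > 0 and C(A) = (1 + (w₁² + 2·w₁·w₂)/(w₁² + w₁·w₂ + w₂²)) · C(B). -/
open Finset Real

/-- matching lower-bound instance for simultaneous uniformly weighted
two-player congestion games, case `w₁ ≥ w₂ > 0`. -/
theorem poa_sim_uniform_lower (w₁ w₂ : ℝ) (h₂ : 0 < w₂) (h : w₂ ≤ w₁) :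
    ∃ (G : CGame w₁ w₂) (a₁ a₂ b₁ b₂ : Finset (Fin G.n)),
      G.IsNashUni a₁ a₂ ∧ G.IsProfile b₁ b₂ ∧ 0 < G.Cuni b₁ b₂ ∧
      G.Cuni a₁ a₂ =
        (1 + (w₁ ^ 2 + 2 * w₁ * w₂) / (w₁ ^ 2 + w₁ * w₂ + w₂ ^ 2)) *
          G.Cuni b₁ b₂ := by
  have h₁ : 0 < w₁ := h₂.trans_le h
  have hD : 0 < w₁ ^ 2 + w₁ * w₂ + w₂ ^ 2 := by positivity
  let G : CGame w₁ w₂ :=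
    { n := 3
      A1 := {{1}, {0}}
      A2 := {{0, 2}, {1}}
      A1_nonempty := by simp
      A2_nonempty := by simp
      α := ![0, 0, w₁ ^ 2 + w₁ * w₂ + w₂ ^ 2]
      β := ![w₁, w₁ + w₂, 0]
      α_nonneg := by
        intro r
        fin_cases r <;> simp [hD.le]
      β_nonneg := by
        intro r
        fin_cases r <;> simp [h₁.le, (add_pos h₁ h₂).le] }
  let a₁ : Finset (Fin G.n) := ({1} : Finset (Fin 3))
  let a₂ : Finset (Fin G.n) := ({0, 2} : Finset (Fin 3))
  let b₁ : Finset (Fin G.n) := ({0} : Finset (Fin 3))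
  let b₂ : Finset (Fin G.n) := ({1} : Finset (Fin 3))
  have c₁ : G.C1uni a₁ a₂ = (w₁ + w₂) * w₁ := by
    simp [CGame.C1uni, CGame.load, G, a₁, a₂]
  have c₂ : G.C2uni a₁ a₂ = (w₁ + w₂) ^ 2 := by
    simp [CGame.C2uni, CGame.load, G, a₁, a₂]
    ring
  have d₁ : G.C1uni b₁ a₂ = (w₁ + w₂) * w₁ := by
    simp [CGame.C1uni, CGame.load, G, b₁, a₂]
    ring
  have d₂ : G.C2uni a₁ b₂ = (w₁ + w₂) ^ 2 := by
    simp [CGame.C2uni, CGame.load, G, a₁, b₂]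
    ring
  have e : G.Cuni b₁ b₂ = w₁ ^ 2 + w₁ * w₂ + w₂ ^ 2 := by
    simp [CGame.Cuni, CGame.C1uni, CGame.C2uni, CGame.load, G, b₁, b₂]
    ring
  have hA₁ : G.A1 = {a₁, b₁} := rfl
  have hA₂ : G.A2 = {a₂, b₂} := rfl
  refine ⟨G, a₁, a₂, b₁, b₂, ⟨⟨?_, ?_⟩, ?_, ?_⟩, ⟨?_, ?_⟩, e ▸ hD, ?_⟩
  · simp [hA₁]
  · simp [hA₂]
  · simp [hA₁, c₁, d₁]
  · simp [hA₂, c₂, d₂]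
  · simp [hA₁]
  · simp [hA₂]
  · rw [CGame.Cuni, c₁, c₂, e]
    field_simp
    ring
end

section
/- For all real numbers w₁, w₂ ≥ 0 with w₁ + w₂ > 0, it holds that 1 + (2·w₁·w₂ + max(w₁,w₂)²)/(w₁² + w₁·w₂ + w₂²) ≤ 1 + 2/√3, with equality if and only if w₁ = (1 + √3)·w₂ or w₂ = (1 + √3)·w₁. -/
open Finset Real

/-- The gap between `2 / √3` and the parametric ratio is a nonnegative multiple of a square. -/
lemma two_div_sqrt_three_sub_ratio (x y : ℝ) (hD : x ^ 2 + x * y + y ^ 2 ≠ 0) :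
    2 / √3 - (2 * x * y + x ^ 2) / (x ^ 2 + x * y + y ^ 2) =
      (2 - √3) * (x - (1 + √3) * y) ^ 2 / (√3 * (x ^ 2 + x * y + y ^ 2)) := by
  have hs : √3 ^ 2 = 3 := Real.sq_sqrt (by norm_num)
  have hs0 : √3 ≠ 0 := by positivity
  rw [div_sub_div _ _ hs0 hD]
  congr 1
  linear_combination (y ^ 2 * √3 - 2 * x * y) * hs

/-- The ratio bound and its equality case when the larger weight is `x`. -/
lemma ratio_le_two_div_sqrt_three {x y : ℝ} (hy : 0 ≤ y) (hyx : y ≤ x) (hx : 0 < x) :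
    (2 * x * y + x ^ 2) / (x ^ 2 + x * y + y ^ 2) ≤ 2 / √3 ∧
      ((2 * x * y + x ^ 2) / (x ^ 2 + x * y + y ^ 2) = 2 / √3 ↔
        x = (1 + √3) * y ∨ y = (1 + √3) * x) := by
  have hD : 0 < x ^ 2 + x * y + y ^ 2 := by positivity
  have hs0 : 0 < √3 := by positivity
  have hs2 : 0 < 2 - √3 := sub_pos.2 ((Real.sqrt_lt' (by norm_num)).2 (by norm_num))
  have hgap := two_div_sqrt_three_sub_ratio x y hD.ne'
  refine ⟨sub_nonneg.1 (hgap ▸ by positivity), ?_⟩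
  have hne : y ≠ (1 + √3) * x := by nlinarith [mul_pos hs0 hx]
  rw [eq_comm, ← sub_eq_zero, hgap, div_eq_zero_iff, mul_eq_zero,
    or_iff_right hs2.ne', sq_eq_zero_iff, sub_eq_zero]
  simp [hD.ne', hs0.ne', hne]

/-- the parametric bound is maximized at weight ratio `1 + √3`,
with maximal value `1 + 2/√3`. -/
theorem poa_sim_uniform_sup (w₁ w₂ : ℝ) (h₁ : 0 ≤ w₁) (h₂ : 0 ≤ w₂)
    (hsum : 0 < w₁ + w₂) :
    1 + (2 * w₁ * w₂ + (max w₁ w₂) ^ 2) / (w₁ ^ 2 + w₁ * w₂ + w₂ ^ 2) ≤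
      1 + 2 / Real.sqrt 3 ∧
    (1 + (2 * w₁ * w₂ + (max w₁ w₂) ^ 2) / (w₁ ^ 2 + w₁ * w₂ + w₂ ^ 2) =
        1 + 2 / Real.sqrt 3 ↔
      w₁ = (1 + Real.sqrt 3) * w₂ ∨ w₂ = (1 + Real.sqrt 3) * w₁) := by
  rw [add_le_add_iff_left, add_right_inj]
  rcases le_total w₂ w₁ with h | h
  · rw [max_eq_left h]
    exact ratio_le_two_div_sqrt_three h₂ h (by linarith)
  · rw [max_eq_right h, or_comm, mul_right_comm,
      show w₁ ^ 2 + w₁ * w₂ + w₂ ^ 2 = w₂ ^ 2 + w₂ * w₁ + w₁ ^ 2 by ring]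
    exact ratio_le_two_div_sqrt_three h₁ h (by linarith)
end

section
/- Let w₁, w₂ ≥ 0 with w₁ + w₂ > 0. In every weighted two-player congestion game with weights w₁, w₂ and proportional costs, every pure Nash equilibrium A and every action profile B satisfy C(A) ≤ (1 + w₁·w₂·(w₁ + w₂ + max(w₁,w₂))/(w₁³ + w₂³ + w₁·w₂·min(w₁,w₂))) · C(B). -/
open Finset Real

namespace CGame

variable {w₁ w₂ : ℝ}

lemma C1prop_eq_sum_univ (G : CGame w₁ w₂) (a₁ a₂ : Finset (Fin G.n)) :
    G.C1prop a₁ a₂ =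
      ∑ r, if r ∈ a₁ then w₁ * (G.α r + G.β r * G.load a₁ a₂ r) else 0 := by
  rw [C1prop, Finset.mul_sum, Finset.sum_ite_mem, Finset.univ_inter]

lemma C2prop_eq_sum_univ (G : CGame w₁ w₂) (a₁ a₂ : Finset (Fin G.n)) :
    G.C2prop a₁ a₂ =
      ∑ r, if r ∈ a₂ then w₂ * (G.α r + G.β r * G.load a₁ a₂ r) else 0 := by
  rw [C2prop, Finset.mul_sum, Finset.sum_ite_mem, Finset.univ_inter]

/-- A weighted form of the smoothness argument: `μ₁ / D` and `μ₂ / D` are the multipliers of the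
equilibrium conditions of the two players, and `κ / D` is the resulting bound. The variables
`p, q, s, t` indicate whether a resource lies in `a₁, a₂, b₁, b₂`. -/
lemma mul_Cprop_le_of_pointwise (h₁ : 0 ≤ w₁) (h₂ : 0 ≤ w₂) {D μ₁ μ₂ κ : ℝ}
    (hD : 0 ≤ D) (hDμ₁ : D ≤ μ₁) (hDμ₂ : D ≤ μ₂) (hμκ₁ : μ₁ ≤ κ) (hμκ₂ : μ₂ ≤ κ)
    (hpt : ∀ p q s t : ℝ, (p = 0 ∨ p = 1) → (q = 0 ∨ q = 1) → (s = 0 ∨ s = 1) →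
      (t = 0 ∨ t = 1) →
      D * (w₁ * p + w₂ * q) ^ 2 + μ₁ * (w₁ * (s - p) * (w₁ + w₂ * q)) +
        μ₂ * (w₂ * (t - q) * (w₂ + w₁ * p)) ≤ κ * (w₁ * s + w₂ * t) ^ 2)
    (G : CGame w₁ w₂) {a₁ a₂ b₁ b₂ : Finset (Fin G.n)}
    (hA : G.IsNashProp a₁ a₂) (hB : G.IsProfile b₁ b₂) :
    D * G.Cprop a₁ a₂ ≤ κ * G.Cprop b₁ b₂ := by
  have hN₁ := mul_le_mul_of_nonneg_left (hA.2.1 b₁ hB.1) (hD.trans hDμ₁)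
  have hN₂ := mul_le_mul_of_nonneg_left (hA.2.2 b₂ hB.2) (hD.trans hDμ₂)
  suffices h : D * (G.C1prop a₁ a₂ + G.C2prop a₁ a₂) + μ₁ * (G.C1prop b₁ a₂ - G.C1prop a₁ a₂) +
      μ₂ * (G.C2prop a₁ b₂ - G.C2prop a₁ a₂) ≤ κ * (G.C1prop b₁ b₂ + G.C2prop b₁ b₂) by
    unfold Cprop
    linarith
  simp only [C1prop_eq_sum_univ, C2prop_eq_sum_univ, ← Finset.sum_add_distrib,
    ← Finset.sum_sub_distrib, Finset.mul_sum]
  refine Finset.sum_le_sum fun r _ => ?_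
  let ind (c : Finset (Fin G.n)) : ℝ := if r ∈ c then 1 else 0
  have hind (c) : ind c = 0 ∨ ind c = 1 := by
    by_cases h : r ∈ c <;> simp [ind, h]
  have hind_nonneg (c) : 0 ≤ ind c := by rcases hind c with h | h <;> simp [h]
  have hα : D * (w₁ * ind a₁ + w₂ * ind a₂) + μ₁ * (w₁ * (ind b₁ - ind a₁)) +
      μ₂ * (w₂ * (ind b₂ - ind a₂)) ≤ κ * (w₁ * ind b₁ + w₂ * ind b₂) := by
    have e₁ := mul_le_mul_of_nonneg_right hDμ₁ (mul_nonneg h₁ (hind_nonneg a₁))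
    have e₂ := mul_le_mul_of_nonneg_right hDμ₂ (mul_nonneg h₂ (hind_nonneg a₂))
    have e₃ := mul_le_mul_of_nonneg_right hμκ₁ (mul_nonneg h₁ (hind_nonneg b₁))
    have e₄ := mul_le_mul_of_nonneg_right hμκ₂ (mul_nonneg h₂ (hind_nonneg b₂))
    linarith
  have hα' := mul_le_mul_of_nonneg_left hα (G.α_nonneg r)
  have hβ' := mul_le_mul_of_nonneg_left
    (hpt _ _ _ _ (hind a₁) (hind a₂) (hind b₁) (hind b₂)) (G.β_nonneg r)
  simp only [ind] at hα' hβ'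
  simp only [load]
  by_cases ha₁ : r ∈ a₁ <;> by_cases ha₂ : r ∈ a₂ <;> by_cases hb₁ : r ∈ b₁ <;>
    by_cases hb₂ : r ∈ b₂ <;> simp only [ha₁, ha₂, hb₁, hb₂, if_true, if_false] at hα' hβ' ⊢ <;>
    linarith

end CGame

/-- The resource-wise inequality for weights `b ≤ a`. -/
lemma smoothness_of_le {a b : ℝ} (hb : 0 ≤ b) (hab : b ≤ a) (p q s t : ℝ)
    (hp : p = 0 ∨ p = 1) (hq : q = 0 ∨ q = 1) (hs : s = 0 ∨ s = 1) (ht : t = 0 ∨ t = 1) :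
    (a ^ 3 + b ^ 3 + a * b * b) * (a * p + b * q) ^ 2 +
      a * (a ^ 2 + a * b + b ^ 2) * (a * (s - p) * (a + b * q)) +
      (a ^ 3 + b ^ 3 + a * b * b) * (b * (t - q) * (b + a * p)) ≤
    (a + b) * (a ^ 2 + a * b + b ^ 2) * (a * s + b * t) ^ 2 := by
  obtain ⟨c, hc, rfl⟩ : ∃ c, 0 ≤ c ∧ a = b + c := ⟨a - b, sub_nonneg.2 hab, by ring⟩
  rw [← sub_nonneg]
  rcases hp with rfl | rfl <;> rcases hq with rfl | rfl <;> rcases hs with rfl | rfl <;>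
    rcases ht with rfl | rfl <;> ring_nf <;> positivity

/-- The first player's multiplier lies between the denominator and the numerator of the bound. -/
lemma multiplier_bounds {a b : ℝ} (hb : 0 ≤ b) (hab : b ≤ a) :
    a ^ 3 + b ^ 3 + a * b * b ≤ a * (a ^ 2 + a * b + b ^ 2) ∧
      a * (a ^ 2 + a * b + b ^ 2) ≤ (a + b) * (a ^ 2 + a * b + b ^ 2) := by
  obtain ⟨c, hc, rfl⟩ : ∃ c, 0 ≤ c ∧ a = b + c := ⟨a - b, sub_nonneg.2 hab, by ring⟩
  constructor <;> rw [← sub_nonneg] <;> ring_nf <;> positivity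

/-- price of anarchy upper bound for simultaneous proportionally
weighted two-player congestion games with weights `w₁, w₂`. -/
theorem poa_sim_prop_upper (w₁ w₂ : ℝ) (h₁ : 0 ≤ w₁) (h₂ : 0 ≤ w₂)
    (hsum : 0 < w₁ + w₂) (G : CGame w₁ w₂) (a₁ a₂ b₁ b₂ : Finset (Fin G.n))
    (hA : G.IsNashProp a₁ a₂) (hB : G.IsProfile b₁ b₂) :
    G.Cprop a₁ a₂ ≤
      (1 + w₁ * w₂ * (w₁ + w₂ + max w₁ w₂) /
        (w₁ ^ 3 + w₂ ^ 3 + w₁ * w₂ * min w₁ w₂)) * G.Cprop b₁ b₂ := by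
  have hD : 0 < w₁ ^ 3 + w₂ ^ 3 + w₁ * w₂ * min w₁ w₂ := by
    have hmin : 0 ≤ min w₁ w₂ := le_min h₁ h₂
    rcases h₁.eq_or_lt with rfl | h
    · have : 0 < w₂ := by linarith
      positivity
    · positivity
  rw [one_add_div hD.ne', div_mul_eq_mul_div, le_div_iff₀ hD]
  rcases le_total w₂ w₁ with h | h
  · obtain ⟨hlow, hhigh⟩ := multiplier_bounds h₂ h
    rw [max_eq_left h, min_eq_right h] at *
    linarith [CGame.mul_Cprop_le_of_pointwise h₁ h₂ hD.le hlow le_rfl hhigh (hlow.trans hhigh)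
      (smoothness_of_le h₂ h) G hA hB]
  · obtain ⟨hlow, hhigh⟩ := multiplier_bounds h₁ h
    rw [max_eq_right h, min_eq_left h] at *
    have hD_swap : w₂ ^ 3 + w₁ ^ 3 + w₂ * w₁ * w₁ = w₁ ^ 3 + w₂ ^ 3 + w₁ * w₂ * w₁ := by ring
    rw [hD_swap] at hlow
    linarith [CGame.mul_Cprop_le_of_pointwise h₁ h₂ hD.le le_rfl hlow (hlow.trans hhigh) hhigh
      (fun p q s t hp hq hs ht => by linarith [smoothness_of_le h₁ h q p t s hq hp ht hs]) G hA hB]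
end

section
/- Let w₁ ≥ w₂ > 0. There exist a weighted two-player congestion game with weights w₁, w₂ and proportional costs, a pure Nash equilibrium A, and an action profile B such that C(B) > 0 and C(A) = (1 + w₁·w₂·(2·w₁ + w₂)/(w₁³ + w₁·w₂² + w₂³)) · C(B). -/
open Finset Real

/-- matching lower-bound instance for simultaneous proportionally
weighted two-player congestion games, case `w₁ ≥ w₂ > 0`. -/
theorem poa_sim_prop_lower (w₁ w₂ : ℝ) (h₂ : 0 < w₂) (h : w₂ ≤ w₁) :
    ∃ (G : CGame w₁ w₂) (a₁ a₂ b₁ b₂ : Finset (Fin G.n)),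
      G.IsNashProp a₁ a₂ ∧ G.IsProfile b₁ b₂ ∧ 0 < G.Cprop b₁ b₂ ∧
      G.Cprop a₁ a₂ =
        (1 + w₁ * w₂ * (2 * w₁ + w₂) / (w₁ ^ 3 + w₁ * w₂ ^ 2 + w₂ ^ 3)) *
          G.Cprop b₁ b₂ := by
  have h₁ : 0 < w₁ := h₂.trans_le h
  let G : CGame w₁ w₂ :=
    { n := 3
      A1 := {{2}, {1}}
      A2 := {{0, 1}, {2}}
      A1_nonempty := by simp
      A2_nonempty := by simp
      α := ![w₁ ^ 2 + w₁ * w₂ + w₂ ^ 2, 0, 0]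
      β := ![0, w₁, w₁ + w₂]
      α_nonneg := by
        intro r
        fin_cases r <;> simp <;> positivity
      β_nonneg := by
        intro r
        fin_cases r <;> simp <;> positivity }
  have costA₁ : G.C1prop ({2} : Finset (Fin 3)) ({0, 1} : Finset (Fin 3)) =
      w₁ * ((w₁ + w₂) * w₁) := by
    simp [CGame.C1prop, CGame.load, G]
  have costA₂ : G.C2prop ({2} : Finset (Fin 3)) ({0, 1} : Finset (Fin 3)) =
      w₂ * (w₁ ^ 2 + w₁ * w₂ + w₂ ^ 2 + w₁ * w₂) := by
    simp [CGame.C2prop, CGame.load, G]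
  have costB₁ : G.C1prop ({1} : Finset (Fin 3)) ({2} : Finset (Fin 3)) =
      w₁ * (w₁ * w₁) := by
    simp [CGame.C1prop, CGame.load, G]
  have costB₂ : G.C2prop ({1} : Finset (Fin 3)) ({2} : Finset (Fin 3)) =
      w₂ * ((w₁ + w₂) * w₂) := by
    simp [CGame.C2prop, CGame.load, G]
  have deviation₁ : G.C1prop ({1} : Finset (Fin 3)) ({0, 1} : Finset (Fin 3)) =
      w₁ * (w₁ * (w₁ + w₂)) := by
    simp [CGame.C1prop, CGame.load, G]
  have deviation₂ : G.C2prop ({2} : Finset (Fin 3)) ({2} : Finset (Fin 3)) =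
      w₂ * ((w₁ + w₂) * (w₁ + w₂)) := by
    simp [CGame.C2prop, CGame.load, G]
  refine ⟨G, ({2} : Finset (Fin 3)), ({0, 1} : Finset (Fin 3)), ({1} : Finset (Fin 3)),
    ({2} : Finset (Fin 3)), ⟨?_, ?_, ?_⟩, ?_, ?_, ?_⟩
  · simp [CGame.IsProfile, G]
  · intro b₁ hb₁
    obtain rfl | rfl : b₁ = ({2} : Finset (Fin 3)) ∨ b₁ = ({1} : Finset (Fin 3)) := by
      simpa [G] using hb₁
    · exact le_rfl
    · rw [costA₁, deviation₁]
      exact le_of_eq (by ring)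
  · intro b₂ hb₂
    obtain rfl | rfl : b₂ = ({0, 1} : Finset (Fin 3)) ∨ b₂ = ({2} : Finset (Fin 3)) := by
      simpa [G] using hb₂
    · exact le_rfl
    · rw [costA₂, deviation₂]
      exact le_of_eq (by ring)
  · simp [CGame.IsProfile, G]
  · rw [CGame.Cprop, costB₁, costB₂]
    positivity
  · rw [CGame.Cprop, CGame.Cprop, costA₁, costA₂, costB₁, costB₂]
    field_simp
    ring
end

section
/- Let w₁, w₂ > 0 with w₂ ≤ w₁ ≤ 2·w₂. There exist a symmetric weighted two-player congestion game with weights w₁, w₂ and uniform costs, a pure Nash equilibrium A, and an action profile B such that C(B) > 0 and C(A) = (3·(w₁ + w₂)³/(2·w₁³ + 5·w₁²·w₂ + 6·w₁·w₂² + 2·w₂³)) · C(B). -/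
open Finset Real

/-- Slopes of the linear resource costs of `lowerGame`. -/
def lowerSlope (w₁ w₂ : ℝ) : Fin 5 → ℝ :=
  ![(w₁ + w₂) ^ 2, w₁ * (w₁ + w₂), (w₁ + w₂) ^ 2, w₂ * (w₁ + w₂), w₁ ^ 2 + w₁ * w₂ + w₂ ^ 2]

/-- The common action set of `lowerGame`. -/
def lowerActions : Finset (Finset (Fin 5)) :=
  {{2, 3, 4}, {0, 1, 4}, {1, 3, 4}, {0, 2}}

/-- A symmetric game with linear resource costs in which `({2, 3, 4}, {0, 1, 4})` is a costly
equilibrium and `({1, 3, 4}, {0, 2})` is a cheap profile. -/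
def lowerGame (w₁ w₂ : ℝ) (h₁ : 0 ≤ w₁) (h₂ : 0 ≤ w₂) : CGame w₁ w₂ where
  n := 5
  A1 := lowerActions
  A2 := lowerActions
  A1_nonempty := Finset.insert_nonempty _ _
  A2_nonempty := Finset.insert_nonempty _ _
  α _ := 0
  β := lowerSlope w₁ w₂
  α_nonneg _ := le_rfl
  β_nonneg r := by fin_cases r <;> simp [lowerSlope] <;> positivity

/-- Total cost in `lowerGame` of the resources in `s` under the profile `(a₁, a₂)`. -/
def lowerCost (w₁ w₂ : ℝ) (a₁ a₂ s : Finset (Fin 5)) : ℝ :=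
  ∑ r ∈ s, (0 + lowerSlope w₁ w₂ r * ((if r ∈ a₁ then w₁ else 0) + (if r ∈ a₂ then w₂ else 0)))

/-- `lowerCost` written out over the five resources. -/
theorem lowerCost_eq (w₁ w₂ : ℝ) (a₁ a₂ s : Finset (Fin 5)) :
    lowerCost w₁ w₂ a₁ a₂ s =
      (if 0 ∈ s then (w₁ + w₂) ^ 2 *
        ((if 0 ∈ a₁ then w₁ else 0) + if 0 ∈ a₂ then w₂ else 0) else 0) +
      (if 1 ∈ s then w₁ * (w₁ + w₂) *
        ((if 1 ∈ a₁ then w₁ else 0) + if 1 ∈ a₂ then w₂ else 0) else 0) +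
      (if 2 ∈ s then (w₁ + w₂) ^ 2 *
        ((if 2 ∈ a₁ then w₁ else 0) + if 2 ∈ a₂ then w₂ else 0) else 0) +
      (if 3 ∈ s then w₂ * (w₁ + w₂) *
        ((if 3 ∈ a₁ then w₁ else 0) + if 3 ∈ a₂ then w₂ else 0) else 0) +
      (if 4 ∈ s then (w₁ ^ 2 + w₁ * w₂ + w₂ ^ 2) *
        ((if 4 ∈ a₁ then w₁ else 0) + if 4 ∈ a₂ then w₂ else 0) else 0) := by
  have hsum (f : Fin 5 → ℝ) : ∑ r ∈ s, f r = ∑ r, if r ∈ s then f r else 0 := by simp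
  rw [lowerCost, hsum, Fin.sum_univ_five]
  simp [lowerSlope]

/-- matching lower-bound instance for symmetric simultaneous
uniformly weighted games, case `w₂ ≤ w₁ ≤ 2w₂`. -/
theorem poa_sym_uniform_lower_mid (w₁ w₂ : ℝ) (h₁ : 0 < w₁) (h₂ : 0 < w₂)
    (hlo : w₂ ≤ w₁) (hhi : w₁ ≤ 2 * w₂) :
    ∃ (G : CGame w₁ w₂), G.Symm ∧
      ∃ a₁ a₂ b₁ b₂ : Finset (Fin G.n),
        G.IsNashUni a₁ a₂ ∧ G.IsProfile b₁ b₂ ∧ 0 < G.Cuni b₁ b₂ ∧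
        G.Cuni a₁ a₂ =
          (3 * (w₁ + w₂) ^ 3 /
            (2 * w₁ ^ 3 + 5 * w₁ ^ 2 * w₂ + 6 * w₁ * w₂ ^ 2 + 2 * w₂ ^ 3)) *
            G.Cuni b₁ b₂ := by
  have h112 : 0 < w₁ ^ 2 * w₂ := by positivity
  have h122 : 0 < w₁ * w₂ ^ 2 := by positivity
  have h111 : 0 < w₁ ^ 3 := by positivity
  have h222 : 0 < w₂ ^ 3 := by positivity
  have hA : lowerCost w₁ w₂ {2, 3, 4} {0, 1, 4} {2, 3, 4} +
      lowerCost w₁ w₂ {2, 3, 4} {0, 1, 4} {0, 1, 4} = 3 * (w₁ + w₂) ^ 3 := by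
    simp [lowerCost_eq]
    ring
  have hB : lowerCost w₁ w₂ {1, 3, 4} {0, 2} {1, 3, 4} +
      lowerCost w₁ w₂ {1, 3, 4} {0, 2} {0, 2} =
        2 * w₁ ^ 3 + 5 * w₁ ^ 2 * w₂ + 6 * w₁ * w₂ ^ 2 + 2 * w₂ ^ 3 := by
    simp [lowerCost_eq]
    ring
  have hNash₁ : ∀ b ∈ lowerActions, lowerCost w₁ w₂ {2, 3, 4} {0, 1, 4} {2, 3, 4} ≤
      lowerCost w₁ w₂ b {0, 1, 4} b := by
    simp only [lowerActions, Finset.forall_mem_insert, Finset.mem_singleton, forall_eq]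
    refine ⟨le_rfl, ?_, ?_, ?_⟩ <;> simp [lowerCost_eq] <;> nlinarith
  have hNash₂ : ∀ b ∈ lowerActions, lowerCost w₁ w₂ {2, 3, 4} {0, 1, 4} {0, 1, 4} ≤
      lowerCost w₁ w₂ {2, 3, 4} b b := by
    simp only [lowerActions, Finset.forall_mem_insert, Finset.mem_singleton, forall_eq]
    refine ⟨?_, le_rfl, ?_, ?_⟩ <;> simp [lowerCost_eq] <;> nlinarith
  have hmem : (({2, 3, 4} : Finset (Fin 5)) ∈ lowerActions ∧ {0, 1, 4} ∈ lowerActions) ∧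
      ({1, 3, 4} : Finset (Fin 5)) ∈ lowerActions ∧ {0, 2} ∈ lowerActions := by
    simp [lowerActions]
  refine ⟨lowerGame w₁ w₂ h₁.le h₂.le, rfl, ({2, 3, 4} : Finset (Fin 5)),
    ({0, 1, 4} : Finset (Fin 5)), ({1, 3, 4} : Finset (Fin 5)), ({0, 2} : Finset (Fin 5)),
    ⟨hmem.1, hNash₁, hNash₂⟩, hmem.2, lt_of_lt_of_eq (by positivity) hB.symm,
    hA.trans (Eq.trans ?_ (congrArg _ hB.symm))⟩
  rw [div_mul_cancel₀ _ (by positivity)]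
end

section
/- Let w₁, w₂ > 0 with 2·w₂ ≤ w₁ ≤ τ·w₂, where τ = (2·(62 − 3·√183)^(1/3) + (62 + 3·√183)^(1/3))/3. There exist a symmetric weighted two-player congestion game with weights w₁, w₂ and uniform costs, a pure Nash equilibrium A, and an action profile B such that C(B) > 0 and C(A) = ((3·w₁³ + 8·w₁²·w₂ + 5·w₁·w₂² + 2·w₂³)/(2·w₁³ + 4·w₁²·w₂ + 4·w₁·w₂² + 2·w₂³)) · C(B). -/
open Finset Real

namespace CGame.FiveResource

/-- The common action set of the five-resource game. -/
def actions : Finset (Finset (Fin 5)) := {{3, 4}, {1, 2, 4}, {0, 2, 4}, {1, 3}}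

/-- The constant cost coefficients of the five-resource game. -/
def constCoeff (w₁ w₂ : ℝ) : Fin 5 → ℝ :=
  ![(w₁ ^ 2 + w₁ * w₂ + w₂ ^ 2) * w₂, 0, 0, 0, 0]

/-- The linear cost coefficients of the five-resource game. -/
def linCoeff (w₁ w₂ : ℝ) : Fin 5 → ℝ :=
  ![0, w₁ ^ 2 + w₁ * w₂ + w₂ ^ 2, w₁ ^ 2 - w₂ ^ 2, w₁ ^ 2 + 2 * w₁ * w₂,
    w₁ ^ 2 + w₁ * w₂ + w₂ ^ 2]

variable {w₁ w₂ : ℝ}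

/-- A symmetric game on five resources whose equilibrium `({3, 4}, {1, 2, 4})` is to be compared
with the profile `({0, 2, 4}, {1, 3})`. -/
def game (h₂ : 0 ≤ w₂) (h : w₂ ≤ w₁) : CGame w₁ w₂ where
  n := 5
  A1 := actions
  A2 := actions
  A1_nonempty := Finset.insert_nonempty _ _
  A2_nonempty := Finset.insert_nonempty _ _
  α := constCoeff w₁ w₂
  β := linCoeff w₁ w₂
  α_nonneg r := by
    have h₁ : 0 ≤ w₁ := h₂.trans h
    fin_cases r <;> simp [constCoeff]
    positivity
  β_nonneg r := by
    have h₁ : 0 ≤ w₁ := h₂.trans h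
    have hsq : w₂ ^ 2 ≤ w₁ ^ 2 := pow_le_pow_left₀ h₂ h 2
    fin_cases r <;> simp [linCoeff] <;> first | positivity | exact hsq

theorem C1uni_game (h₂ : 0 ≤ w₂) (h : w₂ ≤ w₁) (a₁ a₂ : Finset (Fin 5)) :
    (game h₂ h).C1uni a₁ a₂ = ∑ r ∈ a₁, (constCoeff w₁ w₂ r + linCoeff w₁ w₂ r *
      ((if r ∈ a₁ then w₁ else 0) + (if r ∈ a₂ then w₂ else 0))) :=
  rfl

theorem C2uni_game (h₂ : 0 ≤ w₂) (h : w₂ ≤ w₁) (a₁ a₂ : Finset (Fin 5)) :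
    (game h₂ h).C2uni a₁ a₂ = ∑ r ∈ a₂, (constCoeff w₁ w₂ r + linCoeff w₁ w₂ r *
      ((if r ∈ a₁ then w₁ else 0) + (if r ∈ a₂ then w₂ else 0))) :=
  rfl

theorem Cuni_game (h₂ : 0 ≤ w₂) (h : w₂ ≤ w₁) (a₁ a₂ : Finset (Fin 5)) :
    (game h₂ h).Cuni a₁ a₂ = (game h₂ h).C1uni a₁ a₂ + (game h₂ h).C2uni a₁ a₂ :=
  rfl

theorem isProfile_game (h₂ : 0 ≤ w₂) (h : w₂ ≤ w₁) (a₁ a₂ : Finset (Fin 5)) :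
    (game h₂ h).IsProfile a₁ a₂ ↔ a₁ ∈ actions ∧ a₂ ∈ actions :=
  Iff.rfl

theorem mem_actions {a : Finset (Fin 5)} :
    a ∈ actions ↔ a = {3, 4} ∨ a = {1, 2, 4} ∨ a = {0, 2, 4} ∨ a = {1, 3} := by
  simp [actions]

theorem isNashUni_game (h₂ : 0 ≤ w₂) (h : w₂ ≤ w₁) :
    (game h₂ h).IsNashUni ({3, 4} : Finset (Fin 5)) ({1, 2, 4} : Finset (Fin 5)) := by
  have h₁ : 0 ≤ w₁ := h₂.trans h
  have hcube : 0 ≤ w₁ ^ 3 := by positivity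
  have hsq : 0 ≤ w₁ ^ 2 * w₂ := by positivity
  have hsq' : 0 ≤ w₁ * w₂ ^ 2 := by positivity
  have hcmp : w₂ ^ 2 * w₂ ≤ w₁ ^ 2 * w₂ := by gcongr
  refine ⟨?_, fun (b : Finset (Fin 5)) hb ↦ ?_, fun (b : Finset (Fin 5)) hb ↦ ?_⟩
  · simp [isProfile_game, mem_actions]
  · rw [C1uni_game, C1uni_game]
    rcases mem_actions.1 hb with rfl | rfl | rfl | rfl <;>
      simp [constCoeff, linCoeff] <;> linarith
  · rw [C2uni_game, C2uni_game]
    rcases mem_actions.1 hb with rfl | rfl | rfl | rfl <;>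
      simp [constCoeff, linCoeff] <;> linarith

theorem Cuni_equilibrium (h₂ : 0 ≤ w₂) (h : w₂ ≤ w₁) :
    (game h₂ h).Cuni ({3, 4} : Finset (Fin 5)) ({1, 2, 4} : Finset (Fin 5)) =
      3 * w₁ ^ 3 + 8 * w₁ ^ 2 * w₂ + 5 * w₁ * w₂ ^ 2 + 2 * w₂ ^ 3 := by
  rw [Cuni_game, C1uni_game, C2uni_game]
  simp [constCoeff, linCoeff]
  ring

theorem Cuni_optimum (h₂ : 0 ≤ w₂) (h : w₂ ≤ w₁) :
    (game h₂ h).Cuni ({0, 2, 4} : Finset (Fin 5)) ({1, 3} : Finset (Fin 5)) =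
      2 * w₁ ^ 3 + 4 * w₁ ^ 2 * w₂ + 4 * w₁ * w₂ ^ 2 + 2 * w₂ ^ 3 := by
  rw [Cuni_game, C1uni_game, C2uni_game]
  simp [constCoeff, linCoeff]
  ring

end CGame.FiveResource

/-- matching lower-bound instance for symmetric simultaneous
uniformly weighted games, case `2w₂ ≤ w₁ ≤ τw₂`. -/
theorem poa_sym_uniform_lower_high (w₁ w₂ : ℝ) (h₁ : 0 < w₁) (h₂ : 0 < w₂) (τ : ℝ)
    (hτ : τ = (2 * (62 - 3 * Real.sqrt 183) ^ ((1 : ℝ) / 3) + (62 + 3 * Real.sqrt 183) ^ ((1 : ℝ) / 3)) / 3)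
    (hlo : 2 * w₂ ≤ w₁) (hhi : w₁ ≤ τ * w₂) :
    ∃ (G : CGame w₁ w₂), G.Symm ∧
      ∃ a₁ a₂ b₁ b₂ : Finset (Fin G.n),
        G.IsNashUni a₁ a₂ ∧ G.IsProfile b₁ b₂ ∧ 0 < G.Cuni b₁ b₂ ∧
        G.Cuni a₁ a₂ =
          ((3 * w₁ ^ 3 + 8 * w₁ ^ 2 * w₂ + 5 * w₁ * w₂ ^ 2 + 2 * w₂ ^ 3) /
            (2 * w₁ ^ 3 + 4 * w₁ ^ 2 * w₂ + 4 * w₁ * w₂ ^ 2 + 2 * w₂ ^ 3)) *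
            G.Cuni b₁ b₂ := by
  have hle : w₂ ≤ w₁ := by linarith
  have hpos : 0 < 2 * w₁ ^ 3 + 4 * w₁ ^ 2 * w₂ + 4 * w₁ * w₂ ^ 2 + 2 * w₂ ^ 3 := by positivity
  refine ⟨CGame.FiveResource.game h₂.le hle, rfl, ({3, 4} : Finset (Fin 5)),
    ({1, 2, 4} : Finset (Fin 5)), ({0, 2, 4} : Finset (Fin 5)), ({1, 3} : Finset (Fin 5)),
    CGame.FiveResource.isNashUni_game h₂.le hle, ?_, ?_, ?_⟩
  · simp [CGame.FiveResource.isProfile_game, CGame.FiveResource.mem_actions]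
  · rwa [CGame.FiveResource.Cuni_optimum]
  · rw [CGame.FiveResource.Cuni_equilibrium, CGame.FiveResource.Cuni_optimum,
      div_mul_cancel₀ _ hpos.ne']
end

section
/- Let w₁, w₂ > 0 with w₁ ≥ τ·w₂, where τ = (2·(62 − 3·√183)^(1/3) + (62 + 3·√183)^(1/3))/3. There exist a symmetric weighted two-player congestion game with weights w₁, w₂ and uniform costs, a pure Nash equilibrium A, and an action profile B such that C(B) > 0 and C(A) = (2·(w₁² + w₁·w₂ + w₂²)/(w₁ + w₂)²) · C(B). -/
open Finset Real

/-- The lower-bound instance: resources `0, …, 4`, with equilibrium actions `{3, 4}`, `{1, 2, 4}`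
and optimal actions `{0, 4}`, `{2, 3}`, all available to both players. -/
def lowerBoundGame (w₁ w₂ : ℝ) (h₂ : 0 ≤ w₂) (h : w₂ ≤ w₁) : CGame w₁ w₂ where
  n := 5
  A1 := {{3, 4}, {1, 2, 4}, {0, 4}, {2, 3}}
  A2 := {{3, 4}, {1, 2, 4}, {0, 4}, {2, 3}}
  A1_nonempty := Finset.insert_nonempty _ _
  A2_nonempty := Finset.insert_nonempty _ _
  α := ![w₁ ^ 2, w₁ ^ 2 - w₂ ^ 2, 0, 0, 0]
  β := ![0, 0, w₂, w₁, w₂]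
  α_nonneg r := by
    have hsq : w₂ ^ 2 ≤ w₁ ^ 2 := pow_le_pow_left₀ h₂ h 2
    fin_cases r <;> simp [sq_nonneg, hsq]
  β_nonneg r := by
    have h₁ : 0 ≤ w₁ := h₂.trans h
    fin_cases r <;> simp [h₁, h₂]

theorem C1uni_lowerBoundGame {w₁ w₂ : ℝ} (h₂ : 0 ≤ w₂) (h : w₂ ≤ w₁) (a₁ a₂ : Finset (Fin 5)) :
    (lowerBoundGame w₁ w₂ h₂ h).C1uni a₁ a₂ =
      ∑ r ∈ a₁, ((![w₁ ^ 2, w₁ ^ 2 - w₂ ^ 2, 0, 0, 0] : Fin 5 → ℝ) r +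
        (![0, 0, w₂, w₁, w₂] : Fin 5 → ℝ) r *
          ((if r ∈ a₁ then w₁ else 0) + (if r ∈ a₂ then w₂ else 0))) :=
  rfl

theorem C2uni_lowerBoundGame {w₁ w₂ : ℝ} (h₂ : 0 ≤ w₂) (h : w₂ ≤ w₁) (a₁ a₂ : Finset (Fin 5)) :
    (lowerBoundGame w₁ w₂ h₂ h).C2uni a₁ a₂ =
      ∑ r ∈ a₂, ((![w₁ ^ 2, w₁ ^ 2 - w₂ ^ 2, 0, 0, 0] : Fin 5 → ℝ) r +
        (![0, 0, w₂, w₁, w₂] : Fin 5 → ℝ) r *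
          ((if r ∈ a₁ then w₁ else 0) + (if r ∈ a₂ then w₂ else 0))) :=
  rfl

theorem mem_A1_lowerBoundGame {w₁ w₂ : ℝ} (h₂ : 0 ≤ w₂) (h : w₂ ≤ w₁) (a : Finset (Fin 5)) :
    a ∈ (lowerBoundGame w₁ w₂ h₂ h).A1 ↔
      a = {3, 4} ∨ a = {1, 2, 4} ∨ a = {0, 4} ∨ a = {2, 3} := by
  change a ∈ ({{3, 4}, {1, 2, 4}, {0, 4}, {2, 3}} : Finset (Finset (Fin 5))) ↔ _
  simp only [Finset.mem_insert, Finset.mem_singleton]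

theorem one_le_threshold :
    (1 : ℝ) ≤ (2 * (62 - 3 * Real.sqrt 183) ^ ((1 : ℝ) / 3)
      + (62 + 3 * Real.sqrt 183) ^ ((1 : ℝ) / 3)) / 3 := by
  have hsqrt : Real.sqrt 183 ≤ 14 := Real.sqrt_le_iff.mpr (by norm_num)
  have hfirst : 0 ≤ (62 - 3 * Real.sqrt 183) ^ ((1 : ℝ) / 3) :=
    Real.rpow_nonneg (by linarith) _
  have hcube : (27 : ℝ) ^ ((1 : ℝ) / 3) = 3 := by
    rw [show (27 : ℝ) = 3 ^ (3 : ℝ) by norm_num, ← Real.rpow_mul (by norm_num)]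
    norm_num
  have hsecond : (27 : ℝ) ^ ((1 : ℝ) / 3) ≤ (62 + 3 * Real.sqrt 183) ^ ((1 : ℝ) / 3) :=
    Real.rpow_le_rpow (by norm_num) (by linarith [Real.sqrt_nonneg 183]) (by norm_num)
  linarith

/-- matching lower-bound instance for symmetric simultaneous
uniformly weighted games, case `w₁ ≥ τw₂`. -/
theorem poa_sym_uniform_lower_top (w₁ w₂ : ℝ) (h₁ : 0 < w₁) (h₂ : 0 < w₂) (τ : ℝ)
    (hτ : τ = (2 * (62 - 3 * Real.sqrt 183) ^ ((1 : ℝ) / 3) + (62 + 3 * Real.sqrt 183) ^ ((1 : ℝ) / 3)) / 3)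
    (hlo : τ * w₂ ≤ w₁) :
    ∃ (G : CGame w₁ w₂), G.Symm ∧
      ∃ a₁ a₂ b₁ b₂ : Finset (Fin G.n),
        G.IsNashUni a₁ a₂ ∧ G.IsProfile b₁ b₂ ∧ 0 < G.Cuni b₁ b₂ ∧
        G.Cuni a₁ a₂ =
          (2 * (w₁ ^ 2 + w₁ * w₂ + w₂ ^ 2) / (w₁ + w₂) ^ 2) * G.Cuni b₁ b₂ := by
  have hw : w₂ ≤ w₁ := by
    have hone : 1 ≤ τ := hτ ▸ one_le_threshold
    nlinarith
  have hmul : 0 < w₁ * w₂ := mul_pos h₁ h₂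
  have hsq : 0 < w₂ ^ 2 := pow_pos h₂ 2
  have hA : (lowerBoundGame w₁ w₂ h₂.le hw).Cuni ({3, 4} : Finset (Fin 5))
      ({1, 2, 4} : Finset (Fin 5)) = 2 * (w₁ ^ 2 + w₁ * w₂ + w₂ ^ 2) := by
    refine (congrArg₂ (· + ·) (C1uni_lowerBoundGame ..) (C2uni_lowerBoundGame ..)).trans ?_
    simp
    ring
  have hB : (lowerBoundGame w₁ w₂ h₂.le hw).Cuni ({0, 4} : Finset (Fin 5))
      ({2, 3} : Finset (Fin 5)) = (w₁ + w₂) ^ 2 := by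
    refine (congrArg₂ (· + ·) (C1uni_lowerBoundGame ..) (C2uni_lowerBoundGame ..)).trans ?_
    simp
    ring
  refine ⟨lowerBoundGame w₁ w₂ h₂.le hw, rfl, ({3, 4} : Finset (Fin 5)),
    ({1, 2, 4} : Finset (Fin 5)), ({0, 4} : Finset (Fin 5)), ({2, 3} : Finset (Fin 5)),
    ⟨?_, ?_, ?_⟩, ?_, ?_, ?_⟩
  · exact ⟨(mem_A1_lowerBoundGame _ _ _).2 (by simp), (mem_A1_lowerBoundGame _ _ _).2 (by simp)⟩
  · intro b hb
    rcases (mem_A1_lowerBoundGame _ _ b).1 hb with rfl | rfl | rfl | rfl <;>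
      refine (C1uni_lowerBoundGame ..).trans_le
        (le_of_le_of_eq ?_ (C1uni_lowerBoundGame ..).symm) <;>
      simp <;> nlinarith
  · intro b hb
    rcases (mem_A1_lowerBoundGame _ _ b).1 hb with rfl | rfl | rfl | rfl <;>
      refine (C2uni_lowerBoundGame ..).trans_le
        (le_of_le_of_eq ?_ (C2uni_lowerBoundGame ..).symm) <;>
      simp <;> nlinarith
  · exact ⟨(mem_A1_lowerBoundGame _ _ _).2 (by simp), (mem_A1_lowerBoundGame _ _ _).2 (by simp)⟩
  · rw [hB]
    positivity
  · rw [hA, hB]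
    field_simp
end

section
/- Let w₁, w₂ ≥ 0 with w₁ + w₂ > 0. In every symmetric weighted two-player congestion game with weights w₁, w₂ and uniform costs, every pure Nash equilibrium A and every action profile B satisfy C(A) ≤ 2 · C(B). -/
open Finset Real

namespace CGame

variable {w₁ w₂ : ℝ}

/-- The uniform cost of using the resources `s` with weight `p` while an opponent of weight `q`
uses the resources `t`. -/
def soloCost (G : CGame w₁ w₂) (p q : ℝ) (s t : Finset (Fin G.n)) : ℝ :=
  ∑ r ∈ s, (G.α r + G.β r * ((if r ∈ s then p else 0) + (if r ∈ t then q else 0)))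

lemma C1uni_eq_soloCost (G : CGame w₁ w₂) (s t : Finset (Fin G.n)) :
    G.C1uni s t = G.soloCost w₁ w₂ s t := rfl

lemma C2uni_eq_soloCost (G : CGame w₁ w₂) (s t : Finset (Fin G.n)) :
    G.C2uni s t = G.soloCost w₂ w₁ t s := by
  simp only [C2uni, soloCost, load, add_comm]

lemma soloCost_eq_sum_univ (G : CGame w₁ w₂) (p q : ℝ) (s t : Finset (Fin G.n)) :
    G.soloCost p q s t =
      ∑ r, if r ∈ s then G.α r + G.β r * (p + if r ∈ t then q else 0) else 0 := by
  rw [← Finset.sum_filter, Finset.filter_univ_mem]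
  exact Finset.sum_congr rfl fun r hr => by rw [if_pos hr]

/-- A convex combination of unilateral deviations towards `(b₁, b₂)`, the lighter player
mixing between `b₁` and `b₂`, costs at most twice the social cost of `(b₁, b₂)`. -/
lemma deviation_cost_le (G : CGame w₁ w₂) {p q : ℝ} (hp : 0 ≤ p) (hpq : p ≤ q)
    (a₁ a₂ b₁ b₂ : Finset (Fin G.n)) :
    2 * p * G.soloCost p q b₁ a₂ + (q - p) * G.soloCost p q b₂ a₂
        + (p + q) * G.soloCost q p b₂ a₁
      ≤ 2 * (p + q) * (G.soloCost p q b₁ b₂ + G.soloCost q p b₂ b₁) := by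
  simp only [soloCost_eq_sum_univ, Finset.mul_sum, ← Finset.sum_add_distrib]
  refine Finset.sum_le_sum fun r _ => ?_
  have hα := G.α_nonneg r
  have hβ := G.β_nonneg r
  have hq : 0 ≤ q := hp.trans hpq
  have hd : 0 ≤ q - p := sub_nonneg.2 hpq
  have hαp := mul_nonneg hα hp
  have hαq := mul_nonneg hα hq
  have hβpp := mul_nonneg hβ (mul_nonneg hp hp)
  have hβpq := mul_nonneg hβ (mul_nonneg hp hq)
  have hβqq := mul_nonneg hβ (mul_nonneg hq hq)
  have hβpd := mul_nonneg hβ (mul_nonneg hp hd)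
  have hβqd := mul_nonneg hβ (mul_nonneg hq hd)
  by_cases hb₁ : r ∈ b₁ <;> by_cases hb₂ : r ∈ b₂ <;> by_cases ha₁ : r ∈ a₁ <;>
    by_cases ha₂ : r ∈ a₂ <;> simp only [hb₁, hb₂, ha₁, ha₂, if_true, if_false] <;> nlinarith

/-- An equilibrium between a player of weight `p` and a heavier one of weight `q`, sharing the
actions `S`, costs at most twice as much as any other profile. -/
lemma soloCost_le_two_mul (G : CGame w₁ w₂) {p q : ℝ} (hp : 0 ≤ p) (hpq : p ≤ q)
    (hsum : 0 < p + q) {S : Finset (Finset (Fin G.n))} {a₁ a₂ b₁ b₂ : Finset (Fin G.n)}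
    (h₁ : ∀ b ∈ S, G.soloCost p q a₁ a₂ ≤ G.soloCost p q b a₂)
    (h₂ : ∀ b ∈ S, G.soloCost q p a₂ a₁ ≤ G.soloCost q p b a₁)
    (hb₁ : b₁ ∈ S) (hb₂ : b₂ ∈ S) :
    G.soloCost p q a₁ a₂ + G.soloCost q p a₂ a₁
      ≤ 2 * (G.soloCost p q b₁ b₂ + G.soloCost q p b₂ b₁) := by
  have hdev := G.deviation_cost_le hp hpq a₁ a₂ b₁ b₂
  have e₁ := mul_le_mul_of_nonneg_left (h₁ b₁ hb₁) (mul_nonneg zero_le_two hp)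
  have e₂ := mul_le_mul_of_nonneg_left (h₁ b₂ hb₂) (sub_nonneg.2 hpq)
  have e₃ := mul_le_mul_of_nonneg_left (h₂ b₂ hb₂) hsum.le
  refine le_of_mul_le_mul_left ?_ hsum
  linarith

end CGame

/-- price of anarchy upper bound of `2` for symmetric simultaneous
uniformly weighted two-player congestion games. -/
theorem poa_sym_uniform_two (w₁ w₂ : ℝ) (h₁ : 0 ≤ w₁) (h₂ : 0 ≤ w₂)
    (hsum : 0 < w₁ + w₂) (G : CGame w₁ w₂) (hsym : G.Symm)
    (a₁ a₂ b₁ b₂ : Finset (Fin G.n))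
    (hA : G.IsNashUni a₁ a₂) (hB : G.IsProfile b₁ b₂) :
    G.Cuni a₁ a₂ ≤ 2 * G.Cuni b₁ b₂ := by
  obtain ⟨-, hN₁, hN₂⟩ := hA
  obtain ⟨hb₁, hb₂⟩ := hB
  rw [← show G.A1 = G.A2 from hsym] at hN₂ hb₂
  simp only [CGame.Cuni, CGame.C1uni_eq_soloCost, CGame.C2uni_eq_soloCost] at hN₁ hN₂ ⊢
  rcases le_total w₁ w₂ with h | h
  · exact G.soloCost_le_two_mul h₁ h hsum hN₁ hN₂ hb₁ hb₂
  · have := G.soloCost_le_two_mul h₂ h (by linarith) hN₂ hN₁ hb₂ hb₁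
    linarith
end

section
/- For all w₁, w₂ > 0 there exist a symmetric weighted two-player congestion game with weights w₁, w₂ and uniform costs, a pure Nash equilibrium A, and an action profile B such that C(B) > 0 and C(A) ≥ ((2·w₁ + 2·w₂)/(w₁ + 2·w₂)) · C(B). Consequently, for every ε > 0 there exist such a game (for suitable weights), a pure Nash equilibrium A, and an action profile B with C(B) > 0 and C(A) > (2 − ε) · C(B). -/
open Finset Real

/-- Two parallel resources, one of cost equal to its load and one of constant cost `w₁ + w₂`. -/
noncomputable def pigouGame {w₁ w₂ : ℝ} (hw₁ : 0 < w₁) (hw₂ : 0 < w₂) : CGame w₁ w₂ where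
  n := 2
  A1 := {{0}, {1}}
  A2 := {{0}, {1}}
  A1_nonempty := insert_nonempty _ _
  A2_nonempty := insert_nonempty _ _
  α := ![0, w₁ + w₂]
  β := ![1, 0]
  α_nonneg := by
    intro r
    fin_cases r
    · simp
    · simpa using (add_pos hw₁ hw₂).le
  β_nonneg := by
    intro r
    fin_cases r <;> simp

theorem pigouGame_C1uni {w₁ w₂ : ℝ} (hw₁ : 0 < w₁) (hw₂ : 0 < w₂) (a₁ a₂ : Finset (Fin 2)) :
    (pigouGame hw₁ hw₂).C1uni a₁ a₂ =
      ∑ r ∈ a₁, ((![0, w₁ + w₂] : Fin 2 → ℝ) r + (![1, 0] : Fin 2 → ℝ) r *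
        ((if r ∈ a₁ then w₁ else 0) + (if r ∈ a₂ then w₂ else 0))) :=
  rfl

theorem pigouGame_C2uni {w₁ w₂ : ℝ} (hw₁ : 0 < w₁) (hw₂ : 0 < w₂) (a₁ a₂ : Finset (Fin 2)) :
    (pigouGame hw₁ hw₂).C2uni a₁ a₂ =
      ∑ r ∈ a₂, ((![0, w₁ + w₂] : Fin 2 → ℝ) r + (![1, 0] : Fin 2 → ℝ) r *
        ((if r ∈ a₁ then w₁ else 0) + (if r ∈ a₂ then w₂ else 0))) :=
  rfl

/-- Sharing the load-dependent resource is an equilibrium of the Pigou game, at a cost exceeding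
that of the profile splitting the players by the factor `(2 * w₁ + 2 * w₂) / (w₁ + 2 * w₂)`. -/
theorem exists_symm_nashUni_ratio (w₁ w₂ : ℝ) (hw₁ : 0 < w₁) (hw₂ : 0 < w₂) :
    ∃ (G : CGame w₁ w₂), G.Symm ∧
      ∃ a₁ a₂ b₁ b₂ : Finset (Fin G.n),
        G.IsNashUni a₁ a₂ ∧ G.IsProfile b₁ b₂ ∧ 0 < G.Cuni b₁ b₂ ∧
        ((2 * w₁ + 2 * w₂) / (w₁ + 2 * w₂)) * G.Cuni b₁ b₂ ≤ G.Cuni a₁ a₂ := by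
  let a : Finset (Fin 2) := {0}
  let b : Finset (Fin 2) := {1}
  have ha : a ∈ ({{0}, {1}} : Finset (Finset (Fin 2))) := by simp [a]
  have hb : b ∈ ({{0}, {1}} : Finset (Finset (Fin 2))) := by simp [b]
  have hopt : (pigouGame hw₁ hw₂).Cuni b a = w₁ + 2 * w₂ := by
    refine (congrArg₂ (· + ·) (pigouGame_C1uni hw₁ hw₂ _ _) (pigouGame_C2uni hw₁ hw₂ _ _)).trans ?_
    simp [a, b]
    ring
  have heq : (pigouGame hw₁ hw₂).Cuni a a = 2 * w₁ + 2 * w₂ := by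
    refine (congrArg₂ (· + ·) (pigouGame_C1uni hw₁ hw₂ _ _) (pigouGame_C2uni hw₁ hw₂ _ _)).trans ?_
    simp [a]
    ring
  refine ⟨pigouGame hw₁ hw₂, rfl, a, a, b, a, ⟨⟨ha, ha⟩, ?_, ?_⟩, ⟨hb, ha⟩, ?_, ?_⟩
  · change ∀ c ∈ ({{0}, {1}} : Finset (Finset (Fin 2))), _
    intro c hc
    rw [pigouGame_C1uni, pigouGame_C1uni]
    obtain rfl | rfl : c = {0} ∨ c = {1} := by simpa using hc
    all_goals simp [a]
  · change ∀ c ∈ ({{0}, {1}} : Finset (Finset (Fin 2))), _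
    intro c hc
    rw [pigouGame_C2uni, pigouGame_C2uni]
    obtain rfl | rfl : c = {0} ∨ c = {1} := by simpa using hc
    all_goals simp [a]
  · rw [hopt]
    positivity
  · rw [hopt, heq, div_mul_cancel₀ _ (by positivity)]

/-- lower-bound instances for symmetric simultaneous uniformly
weighted games whose price of anarchy approaches `2`. -/
theorem poa_sym_uniform_network_lower :
    (∀ w₁ w₂ : ℝ, 0 < w₁ → 0 < w₂ →
      ∃ (G : CGame w₁ w₂), G.Symm ∧
        ∃ a₁ a₂ b₁ b₂ : Finset (Fin G.n),
          G.IsNashUni a₁ a₂ ∧ G.IsProfile b₁ b₂ ∧ 0 < G.Cuni b₁ b₂ ∧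
          ((2 * w₁ + 2 * w₂) / (w₁ + 2 * w₂)) * G.Cuni b₁ b₂ ≤ G.Cuni a₁ a₂) ∧
    (∀ ε : ℝ, 0 < ε →
      ∃ (w₁ w₂ : ℝ), 0 < w₁ ∧ 0 < w₂ ∧
        ∃ (G : CGame w₁ w₂), G.Symm ∧
          ∃ a₁ a₂ b₁ b₂ : Finset (Fin G.n),
            G.IsNashUni a₁ a₂ ∧ G.IsProfile b₁ b₂ ∧ 0 < G.Cuni b₁ b₂ ∧
            (2 - ε) * G.Cuni b₁ b₂ < G.Cuni a₁ a₂) := by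
  refine ⟨exists_symm_nashUni_ratio, fun ε hε => ?_⟩
  obtain ⟨G, hG, a₁, a₂, b₁, b₂, hNash, hProf, hpos, hratio⟩ :=
    exists_symm_nashUni_ratio 1 (ε / 2) one_pos (half_pos hε)
  refine ⟨1, ε / 2, one_pos, half_pos hε, G, hG, a₁, a₂, b₁, b₂, hNash, hProf, hpos, ?_⟩
  refine (mul_lt_mul_of_pos_right ?_ hpos).trans_le hratio
  rw [lt_div_iff₀ (by positivity)]
  nlinarith [mul_pos hε hε]
end

section
/- Let w₁ ≥ w₂ > 0 and let σ be the unique positive real root of x⁴ − 3·x² − 3·x − 1 (equivalently, the unique real root of x³ − x² − 2·x − 1; σ ≈ 2.1479). In every symmetric weighted two-player congestion game with weights w₁, w₂ and proportional costs, every pure Nash equilibrium A and every action profile B satisfy C(A) ≤ ρ · C(B), where ρ = (2·w₁⁴ + 6·w₁³·w₂ + 8·w₁²·w₂² + 6·w₁·w₂³ + 2·w₂⁴)/(2·w₁⁴ + 3·w₁³·w₂ + 4·w₁²·w₂² + 4·w₁·w₂³ + 2·w₂⁴) if w₂ ≤ w₁ ≤ σ·w₂, and ρ = (2·w₁⁴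 + 4·w₁³·w₂ + 4·w₁²·w₂² + 2·w₁·w₂³)/(2·w₁⁴ + w₁³·w₂ + 2·w₁²·w₂² + 3·w₁·w₂³ + w₂⁴) if w₁ ≥ σ·w₂. -/
open Finset Real

namespace CGame

variable {w₁ w₂ : ℝ}

/-- Membership of a resource in an action, as a real number in `{0, 1}`. -/
def ind {n : ℕ} (s : Finset (Fin n)) (r : Fin n) : ℝ := if r ∈ s then 1 else 0

lemma ind_eq_zero_or_one {n : ℕ} (s : Finset (Fin n)) (r : Fin n) :
    ind s r = 0 ∨ ind s r = 1 := by
  unfold ind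
  split_ifs <;> simp

lemma C1uni_eq_sum_ind (G : CGame w₁ w₂) (a₁ a₂ : Finset (Fin G.n)) :
    G.C1uni a₁ a₂ = ∑ r, ind a₁ r * (G.α r + G.β r * (w₁ + w₂ * ind a₂ r)) := by
  rw [C1uni, ← Finset.univ_inter a₁, ← Finset.sum_ite_mem]
  refine Finset.sum_congr rfl fun r _ => ?_
  by_cases h₁ : r ∈ a₁ <;> by_cases h₂ : r ∈ a₂ <;> simp [ind, load, h₁, h₂]

lemma C2uni_eq_sum_ind (G : CGame w₁ w₂) (a₁ a₂ : Finset (Fin G.n)) :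
    G.C2uni a₁ a₂ = ∑ r, ind a₂ r * (G.α r + G.β r * (w₁ * ind a₁ r + w₂)) := by
  rw [C2uni, ← Finset.univ_inter a₂, ← Finset.sum_ite_mem]
  refine Finset.sum_congr rfl fun r _ => ?_
  by_cases h₁ : r ∈ a₁ <;> by_cases h₂ : r ∈ a₂ <;> simp [ind, load, h₁, h₂]

lemma Cprop_eq_uni (G : CGame w₁ w₂) (a₁ a₂ : Finset (Fin G.n)) :
    G.Cprop a₁ a₂ = w₁ * G.C1uni a₁ a₂ + w₂ * G.C2uni a₁ a₂ := rfl

lemma IsNashProp.isNashUni {G : CGame w₁ w₂} {a₁ a₂ : Finset (Fin G.n)}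
    (h₁ : 0 < w₁) (h₂ : 0 < w₂) (hA : G.IsNashProp a₁ a₂) : G.IsNashUni a₁ a₂ :=
  ⟨hA.1, fun b hb => le_of_mul_le_mul_left (hA.2.1 b hb) h₁,
    fun b hb => le_of_mul_le_mul_left (hA.2.2 b hb) h₂⟩

/-- A smoothness-type argument for symmetric games: the four deviations of the two players to
`b₁` and `b₂` are weighted by `l₁, l₂` (player 1) and `m₁, m₂` (player 2), and the resulting
inequality is required for constant and for linear costs on a single resource. -/
lemma mul_Cprop_le_mul_Cprop (h₁ : 0 < w₁) (h₂ : 0 < w₂) {G : CGame w₁ w₂} (hsym : G.Symm)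
    {a₁ a₂ b₁ b₂ : Finset (Fin G.n)} (hA : G.IsNashProp a₁ a₂) (hB : G.IsProfile b₁ b₂)
    {N D l₁ l₂ m₁ m₂ : ℝ} (hl₁ : 0 ≤ l₁) (hl₂ : 0 ≤ l₂) (hm₁ : 0 ≤ m₁) (hm₂ : 0 ≤ m₂)
    (hconst : ∀ p₁ p₂ q₁ q₂ : ℝ, (p₁ = 0 ∨ p₁ = 1) → (p₂ = 0 ∨ p₂ = 1) →
      (q₁ = 0 ∨ q₁ = 1) → (q₂ = 0 ∨ q₂ = 1) →
      D * (w₁ * p₁ + w₂ * p₂) + (l₁ * (q₁ - p₁) + l₂ * (q₂ - p₁)) +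
        (m₁ * (q₁ - p₂) + m₂ * (q₂ - p₂)) ≤ N * (w₁ * q₁ + w₂ * q₂))
    (hlin : ∀ p₁ p₂ q₁ q₂ : ℝ, (p₁ = 0 ∨ p₁ = 1) → (p₂ = 0 ∨ p₂ = 1) →
      (q₁ = 0 ∨ q₁ = 1) → (q₂ = 0 ∨ q₂ = 1) →
      D * (w₁ * p₁ + w₂ * p₂) ^ 2 + (l₁ * (q₁ - p₁) + l₂ * (q₂ - p₁)) * (w₁ + w₂ * p₂) +
        (m₁ * (q₁ - p₂) + m₂ * (q₂ - p₂)) * (w₁ * p₁ + w₂) ≤ N * (w₁ * q₁ + w₂ * q₂) ^ 2) :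
    D * G.Cprop a₁ a₂ ≤ N * G.Cprop b₁ b₂ := by
  obtain ⟨-, hN₁, hN₂⟩ := hA.isNashUni h₁ h₂
  have hb₁ : b₁ ∈ G.A2 := hsym ▸ hB.1
  have hb₂ : b₂ ∈ G.A1 := hsym.symm ▸ hB.2
  have hdev₁₁ := mul_le_mul_of_nonneg_left (hN₁ b₁ hB.1) hl₁
  have hdev₁₂ := mul_le_mul_of_nonneg_left (hN₁ b₂ hb₂) hl₂
  have hdev₂₁ := mul_le_mul_of_nonneg_left (hN₂ b₁ hb₁) hm₁
  have hdev₂₂ := mul_le_mul_of_nonneg_left (hN₂ b₂ hB.2) hm₂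
  have key : D * G.Cprop a₁ a₂ +
      (l₁ * (G.C1uni b₁ a₂ - G.C1uni a₁ a₂) + l₂ * (G.C1uni b₂ a₂ - G.C1uni a₁ a₂)) +
      (m₁ * (G.C2uni a₁ b₁ - G.C2uni a₁ a₂) + m₂ * (G.C2uni a₁ b₂ - G.C2uni a₁ a₂)) ≤
      N * G.Cprop b₁ b₂ := by
    simp only [Cprop_eq_uni, C1uni_eq_sum_ind, C2uni_eq_sum_ind, Finset.mul_sum,
      ← Finset.sum_add_distrib, ← Finset.sum_sub_distrib]
    refine Finset.sum_le_sum fun r _ => ?_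
    have hp₁ := ind_eq_zero_or_one a₁ r
    have hp₂ := ind_eq_zero_or_one a₂ r
    have hq₁ := ind_eq_zero_or_one b₁ r
    have hq₂ := ind_eq_zero_or_one b₂ r
    have hα := mul_le_mul_of_nonneg_left (hconst _ _ _ _ hp₁ hp₂ hq₁ hq₂) (G.α_nonneg r)
    have hβ := mul_le_mul_of_nonneg_left (hlin _ _ _ _ hp₁ hp₂ hq₁ hq₂) (G.β_nonneg r)
    rcases hp₁ with hp₁ | hp₁ <;> rcases hp₂ with hp₂ | hp₂ <;>
      rcases hq₁ with hq₁ | hq₁ <;> rcases hq₂ with hq₂ | hq₂ <;>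
      simp only [hp₁, hp₂, hq₁, hq₂] at hα hβ ⊢ <;> linarith
  linarith

/-- The bound for a ratio `w₁ / w₂` at most the positive root of `x³ - x² - 2x - 1`. -/
lemma mul_Cprop_le_of_cubic_nonpos (h₂ : 0 < w₂) (h : w₂ ≤ w₁)
    (hT : w₁ ^ 3 - w₁ ^ 2 * w₂ - 2 * w₁ * w₂ ^ 2 - w₂ ^ 3 ≤ 0) {G : CGame w₁ w₂}
    (hsym : G.Symm) {a₁ a₂ b₁ b₂ : Finset (Fin G.n)} (hA : G.IsNashProp a₁ a₂)
    (hB : G.IsProfile b₁ b₂) :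
    (2 * w₁ ^ 4 + 3 * w₁ ^ 3 * w₂ + 4 * w₁ ^ 2 * w₂ ^ 2 + 4 * w₁ * w₂ ^ 3 + 2 * w₂ ^ 4) *
        G.Cprop a₁ a₂ ≤
      (2 * w₁ ^ 4 + 6 * w₁ ^ 3 * w₂ + 8 * w₁ ^ 2 * w₂ ^ 2 + 6 * w₁ * w₂ ^ 3 + 2 * w₂ ^ 4) *
        G.Cprop b₁ b₂ := by
  have h₁ : 0 < w₁ := h₂.trans_le h
  have ht : 0 ≤ w₁ - w₂ := sub_nonneg.mpr h
  have hmono (i j : ℕ) : 0 ≤ w₂ ^ i * (w₁ - w₂) ^ j := by positivity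
  have hTmono (i j : ℕ) := mul_nonneg (hmono i j) (neg_nonneg.mpr hT)
  refine mul_Cprop_le_mul_Cprop h₁ h₂ hsym hA hB
    (l₁ := 2 * w₁ ^ 5 + 4 * w₁ ^ 4 * w₂ + 3 * w₁ ^ 3 * w₂ ^ 2)
    (l₂ := 3 * w₁ ^ 3 * w₂ ^ 2 + 4 * w₁ ^ 2 * w₂ ^ 3 + 2 * w₁ * w₂ ^ 4)
    (m₁ := 3 * w₁ ^ 4 * w₂ + 4 * w₁ ^ 3 * w₂ ^ 2 + 2 * w₁ ^ 2 * w₂ ^ 3)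
    (m₂ := w₁ ^ 4 * w₂ + 2 * w₁ ^ 2 * w₂ ^ 3 + 4 * w₁ * w₂ ^ 4 + 2 * w₂ ^ 5)
    (by positivity) (by positivity) (by positivity) (by positivity) ?_ ?_
  · rintro p₁ p₂ q₁ q₂ (rfl | rfl) (rfl | rfl) (rfl | rfl) (rfl | rfl) <;>
      linarith [hmono 5 0, hmono 4 1, hmono 3 2, hmono 2 3, hmono 1 4, hmono 0 5, hTmono 2 0,
        hTmono 1 1, hTmono 0 2]
  · rintro p₁ p₂ q₁ q₂ (rfl | rfl) (rfl | rfl) (rfl | rfl) (rfl | rfl) <;>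
      linarith [hmono 6 0, hmono 5 1, hmono 4 2, hmono 3 3, hmono 2 4, hmono 1 5, hmono 0 6,
        hTmono 3 0, hTmono 2 1, hTmono 1 2, hTmono 0 3]

/-- The bound for a ratio `w₁ / w₂` at least the positive root of `x³ - x² - 2x - 1`. -/
lemma mul_Cprop_le_of_cubic_nonneg (h₂ : 0 < w₂) (h : w₂ ≤ w₁)
    (hT : 0 ≤ w₁ ^ 3 - w₁ ^ 2 * w₂ - 2 * w₁ * w₂ ^ 2 - w₂ ^ 3) {G : CGame w₁ w₂}
    (hsym : G.Symm) {a₁ a₂ b₁ b₂ : Finset (Fin G.n)} (hA : G.IsNashProp a₁ a₂)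
    (hB : G.IsProfile b₁ b₂) :
    (2 * w₁ ^ 4 + w₁ ^ 3 * w₂ + 2 * w₁ ^ 2 * w₂ ^ 2 + 3 * w₁ * w₂ ^ 3 + w₂ ^ 4) *
        G.Cprop a₁ a₂ ≤
      (2 * w₁ ^ 4 + 4 * w₁ ^ 3 * w₂ + 4 * w₁ ^ 2 * w₂ ^ 2 + 2 * w₁ * w₂ ^ 3) *
        G.Cprop b₁ b₂ := by
  have h₁ : 0 < w₁ := h₂.trans_le h
  have ht : 0 ≤ w₁ - w₂ := sub_nonneg.mpr h
  have hmono (i j : ℕ) : 0 ≤ w₂ ^ i * (w₁ - w₂) ^ j := by positivity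
  have hTmono (i j : ℕ) := mul_nonneg (hmono i j) hT
  refine mul_Cprop_le_mul_Cprop h₁ h₂ hsym hA hB
    (l₁ := 2 * w₁ ^ 5 + 2 * w₁ ^ 4 * w₂ + w₁ ^ 3 * w₂ ^ 2 - w₁ * w₂ ^ 4 - w₂ ^ 5)
    (l₂ := w₁ ^ 3 * w₂ ^ 2 + 4 * w₁ ^ 2 * w₂ ^ 3 + 3 * w₁ * w₂ ^ 4 + w₂ ^ 5)
    (m₁ := w₁ ^ 4 * w₂ + 2 * w₁ ^ 3 * w₂ ^ 2 + 5 * w₁ ^ 2 * w₂ ^ 3 + 5 * w₁ * w₂ ^ 4 + 2 * w₂ ^ 5)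
    (m₂ := w₁ ^ 4 * w₂ + w₁ ^ 2 * w₂ ^ 3 + w₁ * w₂ ^ 4)
    (by linarith [hmono 5 0, hmono 4 1, hmono 3 2, hmono 2 3, hmono 1 4, hmono 0 5, hTmono 2 0,
        hTmono 1 1, hTmono 0 2]) (by positivity) (by positivity) (by positivity) ?_ ?_
  · rintro p₁ p₂ q₁ q₂ (rfl | rfl) (rfl | rfl) (rfl | rfl) (rfl | rfl) <;>
      linarith [hmono 5 0, hmono 4 1, hmono 3 2, hmono 2 3, hmono 1 4, hmono 0 5, hTmono 2 0,
        hTmono 1 1, hTmono 0 2]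
  · rintro p₁ p₂ q₁ q₂ (rfl | rfl) (rfl | rfl) (rfl | rfl) (rfl | rfl) <;>
      linarith [hmono 6 0, hmono 5 1, hmono 4 2, hmono 3 3, hmono 2 4, hmono 1 5, hmono 0 6,
        hTmono 3 0, hTmono 2 1, hTmono 1 2, hTmono 0 3]

end CGame

/-- parametric price of anarchy upper bounds for symmetric
simultaneous proportionally weighted two-player congestion games, `w₁ ≥ w₂ > 0`,
with threshold ratio `σ`, the unique positive real root of `x⁴ − 3x² − 3x − 1`. -/
theorem poa_sym_prop_upper (w₁ w₂ : ℝ) (h₂ : 0 < w₂) (h : w₂ ≤ w₁) (σ : ℝ)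
    (hσpos : 0 < σ) (hσroot : σ ^ 4 - 3 * σ ^ 2 - 3 * σ - 1 = 0)
    (hσuniq : ∀ x : ℝ, 0 < x → x ^ 4 - 3 * x ^ 2 - 3 * x - 1 = 0 → x = σ)
    (G : CGame w₁ w₂) (hsym : G.Symm) (a₁ a₂ b₁ b₂ : Finset (Fin G.n))
    (hA : G.IsNashProp a₁ a₂) (hB : G.IsProfile b₁ b₂) :
    (w₁ ≤ σ * w₂ →
      G.Cprop a₁ a₂ ≤
        ((2 * w₁ ^ 4 + 6 * w₁ ^ 3 * w₂ + 8 * w₁ ^ 2 * w₂ ^ 2 + 6 * w₁ * w₂ ^ 3 +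
            2 * w₂ ^ 4) /
          (2 * w₁ ^ 4 + 3 * w₁ ^ 3 * w₂ + 4 * w₁ ^ 2 * w₂ ^ 2 + 4 * w₁ * w₂ ^ 3 +
            2 * w₂ ^ 4)) * G.Cprop b₁ b₂) ∧
    (σ * w₂ ≤ w₁ →
      G.Cprop a₁ a₂ ≤
        ((2 * w₁ ^ 4 + 4 * w₁ ^ 3 * w₂ + 4 * w₁ ^ 2 * w₂ ^ 2 + 2 * w₁ * w₂ ^ 3) /
          (2 * w₁ ^ 4 + w₁ ^ 3 * w₂ + 2 * w₁ ^ 2 * w₂ ^ 2 + 3 * w₁ * w₂ ^ 3 +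
            w₂ ^ 4)) * G.Cprop b₁ b₂) := by
  have h₁ : 0 < w₁ := h₂.trans_le h
  have hcubic : σ ^ 3 - σ ^ 2 - 2 * σ - 1 = 0 := by
    have hfac : (σ + 1) * (σ ^ 3 - σ ^ 2 - 2 * σ - 1) = 0 := by linear_combination hσroot
    exact (mul_eq_zero.mp hfac).resolve_left (by positivity)
  have hσ : 1 < σ := by
    by_contra! hσ
    nlinarith [mul_nonneg hσpos.le hσpos.le, mul_nonneg (sq_nonneg σ) (sub_nonneg.mpr hσ)]
  have hfactor : w₁ ^ 3 - w₁ ^ 2 * w₂ - 2 * w₁ * w₂ ^ 2 - w₂ ^ 3 =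
      (w₁ - σ * w₂) * (w₁ ^ 2 + (σ - 1) * (w₁ * w₂) + (σ ^ 2 - σ - 2) * w₂ ^ 2) := by
    linear_combination w₂ ^ 3 * hcubic
  have hquad : 0 ≤ w₁ ^ 2 + (σ - 1) * (w₁ * w₂) + (σ ^ 2 - σ - 2) * w₂ ^ 2 := by
    have hσ₂ : 0 ≤ σ ^ 2 - σ - 2 := by
      by_contra! hneg
      nlinarith [mul_pos hσpos (neg_pos.mpr hneg)]
    have hσ₁ : 0 ≤ σ - 1 := by linarith
    positivity
  refine ⟨fun hw => ?_, fun hw => ?_⟩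
  · have hT : w₁ ^ 3 - w₁ ^ 2 * w₂ - 2 * w₁ * w₂ ^ 2 - w₂ ^ 3 ≤ 0 :=
      hfactor.le.trans (mul_nonpos_of_nonpos_of_nonneg (by linarith) hquad)
    rw [div_mul_eq_mul_div, le_div_iff₀ (by positivity), mul_comm]
    exact CGame.mul_Cprop_le_of_cubic_nonpos h₂ h hT hsym hA hB
  · have hT : 0 ≤ w₁ ^ 3 - w₁ ^ 2 * w₂ - 2 * w₁ * w₂ ^ 2 - w₂ ^ 3 :=
      (mul_nonneg (by linarith) hquad).trans hfactor.ge
    rw [div_mul_eq_mul_div, le_div_iff₀ (by positivity), mul_comm]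
    exact CGame.mul_Cprop_le_of_cubic_nonneg h₂ h hT hsym hA hB
end

section
/- Let w₁, w₂ > 0 with w₁ ≥ σ·w₂, where σ is the unique positive real root of x⁴ − 3·x² − 3·x − 1 (σ ≈ 2.1479). There exist a symmetric weighted two-player congestion game with weights w₁, w₂ and proportional costs, a pure Nash equilibrium A, and an action profile B such that C(B) > 0 and C(A) = ((2·w₁⁴ + 4·w₁³·w₂ + 4·w₁²·w₂² + 2·w₁·w₂³)/(2·w₁⁴ + w₁³·w₂ + 2·w₁²·w₂² + 3·w₁·w₂³ + w₂⁴)) · C(B). -/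
open Finset Real

/-- matching lower-bound instance for symmetric simultaneous
proportionally weighted games, case `w₁ ≥ σw₂`. -/
theorem poa_sym_prop_lower_high (w₁ w₂ : ℝ) (h₁ : 0 < w₁) (h₂ : 0 < w₂) (σ : ℝ)
    (hσpos : 0 < σ) (hσroot : σ ^ 4 - 3 * σ ^ 2 - 3 * σ - 1 = 0)
    (hσuniq : ∀ x : ℝ, 0 < x → x ^ 4 - 3 * x ^ 2 - 3 * x - 1 = 0 → x = σ)
    (hlo : σ * w₂ ≤ w₁) :
    ∃ (G : CGame w₁ w₂), G.Symm ∧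
      ∃ a₁ a₂ b₁ b₂ : Finset (Fin G.n),
        G.IsNashProp a₁ a₂ ∧ G.IsProfile b₁ b₂ ∧ 0 < G.Cprop b₁ b₂ ∧
        G.Cprop a₁ a₂ =
          ((2 * w₁ ^ 4 + 4 * w₁ ^ 3 * w₂ + 4 * w₁ ^ 2 * w₂ ^ 2 + 2 * w₁ * w₂ ^ 3) /
            (2 * w₁ ^ 4 + w₁ ^ 3 * w₂ + 2 * w₁ ^ 2 * w₂ ^ 2 + 3 * w₁ * w₂ ^ 3 +
              w₂ ^ 4)) * G.Cprop b₁ b₂ := by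
  have hσ : 1 ≤ σ := by
    by_contra! h
    have : σ ^ 4 ≤ 1 := pow_le_one₀ hσpos.le h.le
    nlinarith [sq_nonneg σ]
  have hw : w₂ ≤ w₁ := by nlinarith
  have ht : 0 ≤ w₁ ^ 2 - w₂ ^ 2 := by nlinarith
  refine ⟨{
    n := 4
    A1 := {{2, 3}, {1, 3}, {0, 2}}
    A2 := {{2, 3}, {1, 3}, {0, 2}}
    A1_nonempty := by simp
    A2_nonempty := by simp
    α := fun _ => 0
    β := ![(w₁ + w₂) * (w₁ ^ 2 + w₁ * w₂ + w₂ ^ 2), w₁ * (w₁ ^ 2 - w₂ ^ 2),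
      (w₁ + w₂) * (w₁ ^ 2 - w₂ ^ 2), w₁ * (w₁ ^ 2 + w₁ * w₂ + w₂ ^ 2)]
    α_nonneg := fun _ => le_rfl
    β_nonneg := by
      intro r
      fin_cases r <;> simp <;> positivity }, rfl, {2, 3}, {1, 3}, {1, 3}, {0, 2},
    ⟨⟨by simp, by simp⟩, ?_, ?_⟩, ⟨by simp, by simp⟩, ?_, ?_⟩
  · simp only [Finset.mem_insert, Finset.mem_singleton]
    rintro b (rfl | rfl | rfl) <;>
      refine mul_le_mul_of_nonneg_left ?_ h₁.le <;>
      simp [CGame.load] <;> apply le_of_eq <;> ring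
  · simp only [Finset.mem_insert, Finset.mem_singleton]
    rintro b (rfl | rfl | rfl) <;>
      refine mul_le_mul_of_nonneg_left ?_ h₂.le <;>
      simp [CGame.load]
    · nlinarith [mul_nonneg ht (by positivity : 0 ≤ w₁ ^ 2 + w₁ * w₂ + w₂ ^ 2)]
    · apply le_of_eq
      ring
  · simp [CGame.Cprop, CGame.C1prop, CGame.C2prop, CGame.load]
    positivity
  · simp [CGame.Cprop, CGame.C1prop, CGame.C2prop, CGame.load]
    field_simp
    ring
end

section
/- Let w₁, w₂ > 0. There exist a weighted two-player congestion game with weights w₁, w₂ and uniform costs, a subgame-perfect outcome A with player 1 moving first, and an action profile B such that C(B) > 0 and C(A) = ρ · C(B), where ρ = 1 + w₁/(w₁ + w₂) if w₂ ≤ w₁; ρ = 1 + 2·w₁·w₂/(2·w₁² + w₁·w₂ + w₂²) if w₁ ≤ w₂ ≤ 2·w₁; and ρ = 1 + w₂/(2·w₁ + w₂) if w₂ ≥ 2·w₁. -/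
open Finset Real

section Instances

variable {w₁ w₂ : ℝ}

/-- Player 1 trades a congestible resource for an equally expensive private one. -/
theorem exists_spe_ratio_leader_shifts (h₁ : 0 < w₁) (h₂ : 0 < w₂) :
    ∃ (G : CGame w₁ w₂) (a₁ a₂ b₁ b₂ : Finset (Fin G.n)),
      G.IsSPE1Uni a₁ a₂ ∧ G.IsProfile b₁ b₂ ∧ 0 < G.Cuni b₁ b₂ ∧
      G.Cuni a₁ a₂ = (1 + w₁ / (w₁ + w₂)) * G.Cuni b₁ b₂ := by
  let G : CGame w₁ w₂ :=
    { n := 3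
      A1 := {{2}, {0}}
      A2 := {{1}, {2}}
      A1_nonempty := by simp
      A2_nonempty := by simp
      α := ![w₁, w₁ + w₂, 0]
      β := ![0, 0, 1]
      α_nonneg := by intro r; fin_cases r <;> simp <;> positivity
      β_nonneg := by intro r; fin_cases r <;> simp }
  let a₁ : Finset (Fin 3) := {2}
  let b₁ : Finset (Fin 3) := {0}
  let a₂ : Finset (Fin 3) := {1}
  let b₂ : Finset (Fin 3) := {2}
  have hA1 : G.A1 = {a₁, b₁} := rfl
  have hA2 : G.A2 = {a₂, b₂} := rfl
  have leader_aa : G.C1uni a₁ a₂ = w₁ := by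
    simp [CGame.C1uni, CGame.load, G, a₁, a₂]
  have leader_bb : G.C1uni b₁ b₂ = w₁ := by
    simp [CGame.C1uni, CGame.load, G, b₁, b₂]
  have follower_aa : G.C2uni a₁ a₂ = w₁ + w₂ := by
    simp [CGame.C2uni, CGame.load, G, a₁, a₂]
  have follower_ab : G.C2uni a₁ b₂ = w₁ + w₂ := by
    simp [CGame.C2uni, CGame.load, G, a₁, b₂]
  have follower_ba : G.C2uni b₁ a₂ = w₁ + w₂ := by
    simp [CGame.C2uni, CGame.load, G, b₁, a₂]
  have follower_bb : G.C2uni b₁ b₂ = w₂ := by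
    simp [CGame.C2uni, CGame.load, G, b₁, b₂]
  have hne : b₁ ≠ a₁ := by decide
  refine ⟨G, a₁, a₂, b₁, b₂, ⟨⟨by simp [hA1], by simp [hA2]⟩,
    fun x => if x = a₁ then a₂ else b₂, ?_, ?_, by simp, ?_⟩,
    ⟨by simp [hA1], by simp [hA2]⟩, ?_, ?_⟩
  · simp [hA1, hA2, hne]
  · simp [hA1, hA2, hne, follower_aa, follower_ab, follower_ba, follower_bb, h₁.le]
  · simp [hA1, hne, leader_aa, leader_bb]
  · rw [CGame.Cuni, leader_bb, follower_bb]
    positivity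
  · rw [CGame.Cuni, CGame.Cuni, leader_aa, leader_bb, follower_aa, follower_bb]
    field_simp
    ring

/-- Player 2 threatens to congest the resource player 1 would keep after deviating. -/
theorem exists_spe_ratio_follower_threatens (h₁ : 0 < w₁) (h₂ : 0 < w₂) :
    ∃ (G : CGame w₁ w₂) (a₁ a₂ b₁ b₂ : Finset (Fin G.n)),
      G.IsSPE1Uni a₁ a₂ ∧ G.IsProfile b₁ b₂ ∧ 0 < G.Cuni b₁ b₂ ∧
      G.Cuni a₁ a₂ =
        (1 + 2 * w₁ * w₂ / (2 * w₁ ^ 2 + w₁ * w₂ + w₂ ^ 2)) * G.Cuni b₁ b₂ := by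
  let G : CGame w₁ w₂ :=
    { n := 4
      A1 := {{0, 3}, {0}}
      A2 := {{1}, {2, 3}, {0, 3}}
      A1_nonempty := by simp
      A2_nonempty := by simp
      α := ![0, (w₁ + w₂) ^ 2, w₁ * (w₁ + w₂), 0]
      β := ![w₁, 0, 0, w₂]
      α_nonneg := by intro r; fin_cases r <;> simp <;> positivity
      β_nonneg := by intro r; fin_cases r <;> simp <;> positivity }
  let a₁ : Finset (Fin 4) := {0, 3}
  let b₁ : Finset (Fin 4) := {0}
  let a₂ : Finset (Fin 4) := {1}
  let b₂ : Finset (Fin 4) := {2, 3}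
  let d₂ : Finset (Fin 4) := {0, 3}
  have hA1 : G.A1 = {a₁, b₁} := rfl
  have hA2 : G.A2 = {a₂, b₂, d₂} := rfl
  have leader_aa : G.C1uni a₁ a₂ = w₁ * (w₁ + w₂) := by
    simp [CGame.C1uni, CGame.load, G, a₁, a₂]; ring
  have leader_bb : G.C1uni b₁ b₂ = w₁ ^ 2 := by
    simp [CGame.C1uni, CGame.load, G, b₁, b₂]; ring
  have leader_bd : G.C1uni b₁ d₂ = w₁ * (w₁ + w₂) := by
    simp [CGame.C1uni, CGame.load, G, b₁, d₂]
  have follower_aa : G.C2uni a₁ a₂ = (w₁ + w₂) ^ 2 := by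
    simp [CGame.C2uni, CGame.load, G, a₁, a₂]
  have follower_ab : G.C2uni a₁ b₂ = (w₁ + w₂) ^ 2 := by
    simp [CGame.C2uni, CGame.load, G, a₁, b₂]; ring
  have follower_ad : G.C2uni a₁ d₂ = (w₁ + w₂) ^ 2 := by
    simp [CGame.C2uni, CGame.load, G, a₁, d₂]; ring
  have follower_ba : G.C2uni b₁ a₂ = (w₁ + w₂) ^ 2 := by
    simp [CGame.C2uni, CGame.load, G, b₁, a₂]
  have follower_bb : G.C2uni b₁ b₂ = w₁ * (w₁ + w₂) + w₂ ^ 2 := by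
    simp [CGame.C2uni, CGame.load, G, b₁, b₂]; ring
  have follower_bd : G.C2uni b₁ d₂ = w₁ * (w₁ + w₂) + w₂ ^ 2 := by
    simp [CGame.C2uni, CGame.load, G, b₁, d₂]; ring
  have hne : b₁ ≠ a₁ := by decide
  refine ⟨G, a₁, a₂, b₁, b₂, ⟨⟨by simp [hA1], by simp [hA2]⟩,
    fun x => if x = a₁ then a₂ else d₂, ?_, ?_, by simp, ?_⟩,
    ⟨by simp [hA1], by simp [hA2]⟩, ?_, ?_⟩
  · simp [hA1, hA2, hne]
  · have hle : w₁ * (w₁ + w₂) + w₂ ^ 2 ≤ (w₁ + w₂) ^ 2 := by nlinarith [mul_pos h₁ h₂]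
    simp [hA1, hA2, hne, follower_aa, follower_ab, follower_ad, follower_ba, follower_bb,
      follower_bd, hle]
  · simp [hA1, hne, leader_aa, leader_bd]
  · rw [CGame.Cuni, leader_bb, follower_bb]
    positivity
  · rw [CGame.Cuni, CGame.Cuni, leader_aa, leader_bb, follower_aa, follower_bb]
    field_simp
    ring

/-- Player 1 has a single action, and player 2 is indifferent between sharing its resource and
an equally expensive private one. -/
theorem exists_spe_ratio_follower_shares (h₁ : 0 < w₁) (h₂ : 0 < w₂) :
    ∃ (G : CGame w₁ w₂) (a₁ a₂ b₁ b₂ : Finset (Fin G.n)),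
      G.IsSPE1Uni a₁ a₂ ∧ G.IsProfile b₁ b₂ ∧ 0 < G.Cuni b₁ b₂ ∧
      G.Cuni a₁ a₂ = (1 + w₂ / (2 * w₁ + w₂)) * G.Cuni b₁ b₂ := by
  let G : CGame w₁ w₂ :=
    { n := 2
      A1 := {{1}}
      A2 := {{1}, {0}}
      A1_nonempty := by simp
      A2_nonempty := by simp
      α := ![w₁ + w₂, 0]
      β := ![0, 1]
      α_nonneg := by intro r; fin_cases r <;> simp <;> positivity
      β_nonneg := by intro r; fin_cases r <;> simp }
  let a₁ : Finset (Fin 2) := {1}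
  let a₂ : Finset (Fin 2) := {1}
  let b₂ : Finset (Fin 2) := {0}
  have hA1 : G.A1 = {a₁} := rfl
  have hA2 : G.A2 = {a₂, b₂} := rfl
  have leader_a : G.C1uni a₁ a₂ = w₁ + w₂ := by
    simp [CGame.C1uni, CGame.load, G, a₁, a₂]
  have leader_b : G.C1uni a₁ b₂ = w₁ := by
    simp [CGame.C1uni, CGame.load, G, a₁, b₂]
  have follower_a : G.C2uni a₁ a₂ = w₁ + w₂ := by
    simp [CGame.C2uni, CGame.load, G, a₁, a₂]
  have follower_b : G.C2uni a₁ b₂ = w₁ + w₂ := by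
    simp [CGame.C2uni, CGame.load, G, a₁, b₂]
  refine ⟨G, a₁, a₂, a₁, b₂, ⟨⟨by simp [hA1], by simp [hA2]⟩,
    fun _ => a₂, by simp [hA2], ?_, rfl, by simp [hA1]⟩,
    ⟨by simp [hA1], by simp [hA2]⟩, ?_, ?_⟩
  · simp [hA1, hA2, follower_a, follower_b]
  · rw [CGame.Cuni, leader_b, follower_b]
    positivity
  · rw [CGame.Cuni, CGame.Cuni, leader_a, leader_b, follower_a, follower_b]
    field_simp
    ring

/-- The first two ratios agree when the weights are equal. -/
theorem ratio_eq_of_weights_eq {w : ℝ} (hw : 0 < w) :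
    1 + w / (w + w) = 1 + 2 * w * w / (2 * w ^ 2 + w * w + w ^ 2) := by
  field_simp
  norm_num

/-- The last two ratios agree when player 2 weighs twice as much as player 1. -/
theorem ratio_eq_of_weight_double {w : ℝ} (hw : 0 < w) :
    1 + 2 * w * (2 * w) / (2 * w ^ 2 + w * (2 * w) + (2 * w) ^ 2) =
      1 + 2 * w / (2 * w + 2 * w) := by
  field_simp
  norm_num

end Instances

/-- matching lower-bound instances for sequential uniformly
weighted two-player congestion games, with player 1 moving first. -/
theorem poa_seq_uniform_lower (w₁ w₂ : ℝ) (h₁ : 0 < w₁) (h₂ : 0 < w₂) :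
    ∃ (G : CGame w₁ w₂) (a₁ a₂ b₁ b₂ : Finset (Fin G.n)),
      G.IsSPE1Uni a₁ a₂ ∧ G.IsProfile b₁ b₂ ∧ 0 < G.Cuni b₁ b₂ ∧
      ((w₂ ≤ w₁ →
        G.Cuni a₁ a₂ = (1 + w₁ / (w₁ + w₂)) * G.Cuni b₁ b₂) ∧
      (w₁ ≤ w₂ → w₂ ≤ 2 * w₁ →
        G.Cuni a₁ a₂ =
          (1 + 2 * w₁ * w₂ / (2 * w₁ ^ 2 + w₁ * w₂ + w₂ ^ 2)) * G.Cuni b₁ b₂) ∧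
      (2 * w₁ ≤ w₂ →
        G.Cuni a₁ a₂ = (1 + w₂ / (2 * w₁ + w₂)) * G.Cuni b₁ b₂)) := by
  rcases le_total w₂ w₁ with h | h
  · obtain ⟨G, a₁, a₂, b₁, b₂, hspe, hprof, hpos, hratio⟩ :=
      exists_spe_ratio_leader_shifts h₁ h₂
    refine ⟨G, a₁, a₂, b₁, b₂, hspe, hprof, hpos, fun _ => hratio, fun h' _ => ?_,
      fun h' => absurd h' (by linarith)⟩
    obtain rfl := le_antisymm h h'
    rw [hratio, ratio_eq_of_weights_eq h₁]
  · rcases le_total w₂ (2 * w₁) with h' | h'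
    · obtain ⟨G, a₁, a₂, b₁, b₂, hspe, hprof, hpos, hratio⟩ :=
        exists_spe_ratio_follower_threatens h₁ h₂
      refine ⟨G, a₁, a₂, b₁, b₂, hspe, hprof, hpos, fun h'' => ?_, fun _ _ => hratio,
        fun h'' => ?_⟩
      · obtain rfl := le_antisymm h h''
        rw [hratio, ratio_eq_of_weights_eq h₁]
      · obtain rfl := le_antisymm h' h''
        rw [hratio, ratio_eq_of_weight_double h₁]
    · obtain ⟨G, a₁, a₂, b₁, b₂, hspe, hprof, hpos, hratio⟩ :=
        exists_spe_ratio_follower_shares h₁ h₂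
      refine ⟨G, a₁, a₂, b₁, b₂, hspe, hprof, hpos, fun h'' => absurd h'' (by linarith),
        fun _ h'' => ?_, fun _ => hratio⟩
      obtain rfl := le_antisymm h'' h'
      rw [hratio, ratio_eq_of_weight_double h₁]
end
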